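/- arXiv:1908.08592 — 5 statements merged into one kernel-verified Lean document; each statement's English description precedes it below -/
import Mathlib

section
/- Let a > 0 be real and b ∈ ℂ with Re(b) ≥ 0, and define φ(w) = a·w + b and ψ(w) = a⁻¹·w + a⁻¹·conj(b). Then the identity 1/(φ(w) + 1) = a⁻¹ · 1/(ψ(w) + 1) holds for all w with Re(w) > 0 if and only if a = 1, Im(b) = 0 and b ≥ 0. (This is the reduction, via the kernel k₁, characterizing self-adjointness of C_φ on H²(ℂ₊).) -/
open Complex

theorem selfadjoint_kernel_reduction (a : ℝ) (ha : 0 < a) (b : ℂ) (hb : 0 ≤ b.re)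
    (φ ψ : ℂ → ℂ)
    (hφ : ∀ w, φ w = (a : ℂ) * w + b)
    (hψ : ∀ w, ψ w = (a : ℂ)⁻¹ * w + (a : ℂ)⁻¹ * (starRingEnd ℂ) b) :
    (∀ w : ℂ, 0 < w.re → 1 / (φ w + 1) = (a : ℂ)⁻¹ * (1 / (ψ w + 1))) ↔
      a = 1 ∧ b.im = 0 ∧ 0 ≤ b.re := by
  have ha' : (a : ℂ) ≠ 0 := by exact_mod_cast ha.ne'
  have key : ∀ w : ℂ, (1 / (φ w + 1) = (a : ℂ)⁻¹ * (1 / (ψ w + 1))) ↔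
      (a : ℂ) * w + b + 1 = w + (starRingEnd ℂ) b + a := by
    intro w
    have h : (a : ℂ) * (ψ w + 1) = w + (starRingEnd ℂ) b + a := by
      rw [hψ]
      field_simp
    rw [← h, one_div, one_div, ← mul_inv, inv_inj, hφ]
  constructor
  · intro H
    have h1 := (key 1).1 (H 1 (by norm_num))
    have h2 := (key 2).1 (H 2 (by norm_num))
    have e1 := congrArg Complex.im h1
    have e2 := congrArg Complex.re h2
    simp at e1 e2
    exact ⟨by linarith, by linarith, hb⟩
  · rintro ⟨h1, h2, -⟩ w -
    rw [key, Complex.conj_eq_iff_im.2 h2, h1]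
    simp
end

section
/- Let c ∈ ℂ with Re(c) > 0 and let λ ∈ ℂ. Define f_λ(w) = (w + c)^λ using the principal branch of the complex power. Then sup_{0<x<∞} ∫_{-∞}^{∞} |f_λ(x + iy)|² dy < ∞ if and only if Re(λ) < -1/2. (In particular, taking c = b/(a-1) with a > 1 and Re(b) > 0, the function f_λ belongs to H²(ℂ₊) if and only if Re(λ) < -1/2.) -/
open Complex MeasureTheory

lemma aux_exp (z l : ℂ) : Real.exp (-(Real.pi * |l.im|)) ≤ (Real.exp (arg z * l.im))⁻¹ ∧
    (Real.exp (arg z * l.im))⁻¹ ≤ Real.exp (Real.pi * |l.im|) := by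
  have h : |arg z * l.im| ≤ Real.pi * |l.im| := by
    rw [abs_mul]
    exact mul_le_mul_of_nonneg_right (Complex.abs_arg_le_pi z) (abs_nonneg _)
  rw [← Real.exp_neg, Real.exp_le_exp, Real.exp_le_exp]
  have := abs_le.1 h
  constructor <;> linarith

lemma aux_coe (z : ℂ) : (‖z‖₊ : ENNReal) ^ 2 = ENNReal.ofReal (‖z‖ ^ 2) := by
  rw [ENNReal.ofReal_pow (norm_nonneg _), ofReal_norm]
  rfl

lemma aux_upper (a : ℝ) (ha : 0 < a) (z l : ℂ) (hz : a ≤ z.re) (hl : l.re < -(1 / 2)) :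
    ‖z ^ l‖ ^ 2 ≤ ((min a 1 / 2) ^ l.re * Real.exp (Real.pi * |l.im|)) ^ 2 *
      (1 + ‖z.im‖) ^ (-(-2 * l.re)) := by
  have hz0 : z ≠ 0 := by rintro rfl; simp at hz; linarith
  have hm : 0 < min a 1 := lt_min ha one_pos
  have h1 : min a 1 / 2 * (1 + ‖z.im‖) ≤ ‖z‖ := by
    have e1 := (Complex.re_le_norm z)
    have e2 := (Complex.abs_im_le_norm z)
    have e3 := min_le_left a 1
    have e4 := min_le_right a 1
    rw [Real.norm_eq_abs]
    nlinarith [abs_nonneg z.im]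
  have hp : 0 < 1 + ‖z.im‖ := by positivity
  have h2 : ‖z‖ ^ l.re ≤ (min a 1 / 2) ^ l.re * (1 + ‖z.im‖) ^ l.re := by
    rw [← Real.mul_rpow (by positivity) hp.le]
    exact Real.rpow_le_rpow_of_nonpos (by positivity) h1 (by linarith)
  rw [norm_cpow_of_ne_zero hz0, div_eq_mul_inv]
  have h3 : (1 + ‖z.im‖) ^ (-(-2 * l.re)) = ((1 + ‖z.im‖) ^ l.re) ^ 2 := by
    rw [← Real.rpow_natCast, ← Real.rpow_mul hp.le]
    congr 1; push_cast; ring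
  rw [h3, ← mul_pow]
  refine pow_le_pow_left₀ (by positivity) ?_ 2
  calc _ ≤ ((min a 1 / 2) ^ l.re * (1 + ‖z.im‖) ^ l.re) * Real.exp (Real.pi * |l.im|) :=
        mul_le_mul h2 (aux_exp z l).2 (by positivity) (by positivity)
    _ = _ := by ring

lemma aux_lower (z l : ℂ) (hz : 1 ≤ z.re) (hl : -(1 / 2) ≤ l.re) :
    (Real.exp (-(Real.pi * |l.im|))) ^ 2 * ‖z‖⁻¹ ≤ ‖z ^ l‖ ^ 2 := by
  have hz0 : z ≠ 0 := by rintro rfl; simp at hz; linarith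
  have h1 : 1 ≤ ‖z‖ := hz.trans (Complex.re_le_norm z)
  have h2 : ‖z‖ ^ (-(1 / 2) : ℝ) ≤ ‖z‖ ^ l.re := Real.rpow_le_rpow_of_exponent_le h1 hl
  have h3 : ‖z‖⁻¹ = (‖z‖ ^ (-(1 / 2) : ℝ)) ^ 2 := by
    rw [← Real.rpow_natCast, ← Real.rpow_mul (by positivity), ← Real.rpow_neg_one]
    congr 1; push_cast; ring
  rw [norm_cpow_of_ne_zero hz0, div_eq_mul_inv, h3, ← mul_pow, mul_comm]
  refine pow_le_pow_left₀ (by positivity) ?_ 2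
  exact mul_le_mul h2 (aux_exp z l).1 (by positivity) (by positivity)

theorem cpow_mem_H2_iff (c : ℂ) (hc : 0 < c.re) (l : ℂ) :
    (⨆ x ∈ Set.Ioi (0 : ℝ),
        ∫⁻ y : ℝ, (‖((x : ℂ) + (y : ℂ) * Complex.I + c) ^ l‖₊ : ENNReal) ^ 2) < ⊤ ↔
      l.re < -(1 / 2) := by
  constructor
  · intro h
    by_contra! hl
    have h1 : (∫⁻ y : ℝ, (‖(((1 : ℝ) : ℂ) + (y : ℂ) * Complex.I + c) ^ l‖₊ : ENNReal) ^ 2) < ⊤ :=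
      lt_of_le_of_lt (le_iSup₂ (f := fun (x : ℝ) (_ : x ∈ Set.Ioi (0 : ℝ)) =>
        ∫⁻ y : ℝ, (‖((x : ℂ) + (y : ℂ) * Complex.I + c) ^ l‖₊ : ENNReal) ^ 2) 1
        (Set.mem_Ioi.2 one_pos)) h
    set K := (Real.exp (-(Real.pi * |l.im|))) ^ 2 with hK
    have hKp : 0 < K := by positivity
    set t := 1 + c.re + |c.im| with ht
    have htp : 0 < t := by positivity
    have h2 : IntegrableOn (fun y : ℝ => K * 2⁻¹ * y⁻¹) (Set.Ioi t) := by
      refine ⟨by fun_prop, ?_⟩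
      rw [hasFiniteIntegral_iff_norm]
      refine lt_of_le_of_lt ?_ h1
      refine le_trans ?_ (setLIntegral_le_lintegral (Set.Ioi t) _)
      refine setLIntegral_mono' measurableSet_Ioi fun y hy => ?_
      have hy : t < y := hy
      have hy0 : 0 < y := htp.trans hy
      rw [aux_coe]
      refine ENNReal.ofReal_le_ofReal ?_
      set z : ℂ := ((1 : ℝ) : ℂ) + (y : ℂ) * Complex.I + c with hz
      have hre : z.re = 1 + c.re := by simp [hz]
      have him : z.im = y + c.im := by simp [hz]
      refine le_trans ?_ (aux_lower z l (by rw [hre]; linarith) hl)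
      rw [Real.norm_of_nonneg (by positivity), mul_assoc, ← mul_inv]
      refine mul_le_mul_of_nonneg_left ?_ hKp.le
      have hzp : 0 < ‖z‖ := lt_of_lt_of_le (by rw [hre]; linarith) (Complex.re_le_norm z)
      refine inv_anti₀ hzp ?_
      refine (Complex.norm_le_abs_re_add_abs_im z).trans ?_
      rw [hre, him, abs_of_pos (by linarith)]
      have := abs_add_le y c.im
      rw [abs_of_pos hy0] at this
      linarith
    have h3 := h2.const_mul (K * 2⁻¹)⁻¹
    refine not_integrableOn_Ioi_inv (a := t) (h3.congr ?_)
    filter_upwards with y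
    field_simp
  · intro hl
    set C := ((min c.re 1 / 2) ^ l.re * Real.exp (Real.pi * |l.im|)) ^ 2 with hC
    have hfin : (∫⁻ y : ℝ, ENNReal.ofReal ((1 + ‖y‖) ^ (-(-2 * l.re)))) < ⊤ :=
      finite_integral_one_add_norm (by simp; linarith)
    refine lt_of_le_of_lt (b := ENNReal.ofReal C *
      ∫⁻ y : ℝ, ENNReal.ofReal ((1 + ‖y‖) ^ (-(-2 * l.re)))) ?_
      (ENNReal.mul_lt_top ENNReal.ofReal_lt_top hfin)
    refine iSup₂_le fun x hx => ?_
    have hx : 0 < x := hx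
    rw [← lintegral_add_right_eq_self
      (fun y : ℝ => ENNReal.ofReal ((1 + ‖y‖) ^ (-(-2 * l.re)))) c.im, ← lintegral_const_mul' _ _ ENNReal.ofReal_ne_top]
    refine lintegral_mono fun y => ?_
    simp only
    rw [aux_coe, ← ENNReal.ofReal_mul (by positivity)]
    refine ENNReal.ofReal_le_ofReal ?_
    have := aux_upper c.re hc ((x : ℂ) + (y : ℂ) * Complex.I + c) l (by simp; linarith) hl
    simpa using this
end

section
/- (Non-cyclicity of type I symbols.) Let 0 < a < 1 and b ∈ ℂ with Re(b) > 0, and let φ(w) = a·w + b. Then for every f ∈ H²(ℂ₊), the linear span of the orbit {f ∘ φ^[n] : n ∈ ℕ} is not dense in H²(ℂ₊): there exist g ∈ H²(ℂ₊) and ε > 0 such that every finite linear combination h of the functions f ∘ φ^[n] satisfies ‖g − h‖ ≥ ε. That is, the composition operator C_φ is not cyclic on H²(ℂ₊). -/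
open Complex MeasureTheory

/-- The square of the `H²(ℂ₊)` norm: `sup_{x>0} ∫ |f(x+iy)|² dy`, valued in `ℝ≥0∞`. -/
noncomputable def H2normSq (f : ℂ → ℂ) : ENNReal :=
  ⨆ x ∈ Set.Ioi (0 : ℝ), ∫⁻ y : ℝ, (‖f ((x : ℂ) + (y : ℂ) * Complex.I)‖₊ : ENNReal) ^ 2

/-- Membership in the Hardy space `H²(ℂ₊)` of the right half-plane. -/
def MemH2 (f : ℂ → ℂ) : Prop :=
  DifferentiableOn ℂ f {w : ℂ | 0 < w.re} ∧ H2normSq f < ⊤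

lemma circle_bound (h : ℂ → ℂ) (w : ℂ) (R r : ℝ) (hr : 0 < r) (hrR : r < R)
    (hd : DifferentiableOn ℂ h (Metric.ball w R)) :
    ‖h w‖ₑ ^ 2 * ENNReal.ofReal (2 * Real.pi) ≤
      ∫⁻ θ in Set.Ioo (-Real.pi) Real.pi, ‖h (circleMap w r θ)‖ₑ ^ 2 := by
  have hsub : Metric.closedBall w r ⊆ Metric.ball w R := Metric.closedBall_subset_ball hrR
  have hd2 : DifferentiableOn ℂ (fun z => h z ^ 2) (Metric.ball w R) := hd.pow 2
  have hdc : DiffContOnCl ℂ (fun z => h z ^ 2) (Metric.ball w |r|) := by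
    rw [abs_of_pos hr]
    apply DifferentiableOn.diffContOnCl
    rw [closure_ball _ hr.ne']
    exact hd2.mono hsub
  have h1 := hdc.circleAverage
  rw [Real.circleAverage_def] at h1
  have hper : Function.Periodic (fun θ => h (circleMap w r θ) ^ 2) (2 * Real.pi) := by
    intro θ
    simp only [periodic_circleMap w r θ]
  have h2 := hper.intervalIntegral_add_eq 0 (-Real.pi)
  rw [zero_add, show -Real.pi + 2 * Real.pi = Real.pi by ring] at h2
  rw [h2, intervalIntegral.integral_of_le (by linarith [Real.pi_pos]),
    integral_Ioc_eq_integral_Ioo] at h1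
  have h3 : ‖h w‖ₑ ^ 2 * ENNReal.ofReal (2 * Real.pi) =
      ‖∫ θ in Set.Ioo (-Real.pi) Real.pi, h (circleMap w r θ) ^ 2‖ₑ := by
    rw [← enorm_pow, ← h1, enorm_smul, Real.enorm_eq_ofReal (by positivity), mul_comm,
      ← mul_assoc, ← ENNReal.ofReal_mul (by positivity), mul_inv_cancel₀ (by positivity)]
    simp
  rw [h3]
  refine (enorm_integral_le_lintegral_enorm _).trans (le_of_eq ?_)
  simp

lemma line_le (h : ℂ → ℂ) (x : ℝ) (hx : 0 < x) :
    ∫⁻ y : ℝ, ‖h ((x : ℂ) + (y : ℂ) * Complex.I)‖ₑ ^ 2 ≤ H2normSq h := by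
  unfold H2normSq
  exact le_iSup₂ (f := fun (x : ℝ) (_ : x ∈ Set.Ioi (0 : ℝ)) =>
    ∫⁻ y : ℝ, (‖h ((x : ℂ) + (y : ℂ) * Complex.I)‖₊ : ENNReal) ^ 2) x hx

lemma pw_bound (h : ℂ → ℂ) (hd : DifferentiableOn ℂ h {w : ℂ | 0 < w.re}) (w : ℂ)
    (hw : 0 < w.re) : ‖h w‖ₑ ^ 2 * ENNReal.ofReal w.re ≤ 4 * H2normSq h := by
  set R : ℝ := w.re / 2 with hR
  have hR0 : 0 < R := by positivity
  have hsub : Metric.ball w R ⊆ {w : ℂ | 0 < w.re} := by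
    intro z hz
    have h1 : |(z - w).re| ≤ ‖z - w‖ := Complex.abs_re_le_norm _
    rw [Metric.mem_ball, dist_eq_norm] at hz
    have h2 := (abs_lt.1 (h1.trans_lt hz)).1
    simp only [Complex.sub_re] at h2
    simp only [Set.mem_ofPred_eq]
    linarith
  have hdb := hd.mono hsub
  set G : ℂ → ENNReal := (Metric.ball w R).indicator (fun z => ‖h z‖ₑ ^ 2) with hG
  have hGm : Measurable G := by
    classical
    have h0 : ContinuousOn (fun z => ‖h z‖ₑ ^ 2) (Metric.ball w R) :=
      (ENNReal.continuous_pow 2).comp_continuousOn (continuous_enorm.comp_continuousOn hdb.continuousOn)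
    rw [hG, ← Set.piecewise_eq_indicator]
    exact h0.measurable_piecewise continuousOn_const Metric.isOpen_ball.measurableSet
  have hup : ∫⁻ z, G z ≤ ENNReal.ofReal (2 * R) * H2normSq h := by
    rw [← (Complex.volume_preserving_equiv_real_prod.symm).lintegral_comp_emb
      Complex.measurableEquivRealProd.symm.measurableEmbedding]
    rw [Measure.volume_eq_prod]
    refine (lintegral_prod_le _).trans ?_
    have : ∀ x : ℝ, ∫⁻ y : ℝ, G (Complex.measurableEquivRealProd.symm (x, y)) ≤
        (Set.Ioo (w.re - R) (w.re + R)).indicator (fun _ => H2normSq h) x := by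
      intro x
      by_cases hx : x ∈ Set.Ioo (w.re - R) (w.re + R)
      · rw [Set.indicator_of_mem hx]
        refine le_trans (lintegral_mono fun y => ?_) (line_le h x (by linarith [hx.1]))
        refine (Set.indicator_le_self _ _ _).trans (le_of_eq ?_)
        congr 3
        apply Complex.ext <;> simp
      · rw [Set.indicator_of_notMem hx]
        simp only [nonpos_iff_eq_zero]
        rw [← lintegral_zero (μ := (volume : Measure ℝ))]
        congr 1
        ext y
        apply Set.indicator_of_notMem
        intro hz
        apply hx
        have h1 := Complex.abs_re_le_norm (Complex.measurableEquivRealProd.symm (x, y) - w)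
        rw [Metric.mem_ball, dist_eq_norm] at hz
        have h2 := (abs_lt.1 (h1.trans_lt hz))
        simp at h2
        constructor <;> linarith [h2.1, h2.2]
    refine (lintegral_mono this).trans ?_
    rw [lintegral_indicator measurableSet_Ioo, setLIntegral_const, Real.volume_Ioo, mul_comm]
    apply le_of_eq
    congr 2
    ring
  have hlow : ‖h w‖ₑ ^ 2 * ENNReal.ofReal (2 * Real.pi) * ENNReal.ofReal (R / 2)
      * ENNReal.ofReal (R / 2) ≤ ∫⁻ z, G z := by
    rw [← lintegral_add_left_eq_self G w, ← Complex.lintegral_comp_polarCoord_symm,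
      polarCoord_target, Measure.volume_eq_prod, ← Measure.prod_restrict, lintegral_prod]
    · have : ∀ r ∈ Set.Ioo (R / 2) R, ‖h w‖ₑ ^ 2 * ENNReal.ofReal (2 * Real.pi)
          * ENNReal.ofReal (R / 2) ≤ ∫⁻ θ in Set.Ioo (-Real.pi) Real.pi, ENNReal.ofReal r •
            G (w + Complex.polarCoord.symm (r, θ)) := by
        intro r hr
        have hr0 : 0 < r := by linarith [hr.1]
        simp only [smul_eq_mul]
        rw [lintegral_const_mul' _ _ ENNReal.ofReal_ne_top, mul_comm]
        refine mul_le_mul' (ENNReal.ofReal_le_ofReal hr.1.le) ?_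
        refine (circle_bound h w R r hr0 hr.2 hdb).trans (le_of_eq ?_)
        congr 1
        ext θ
        have e : w + Complex.polarCoord.symm (r, θ) = circleMap w r θ := by
          rw [circleMap, Complex.polarCoord_symm_apply, Complex.exp_mul_I]
          simp
        rw [e, hG, Set.indicator_of_mem]
        rw [Metric.mem_ball, dist_eq_norm]
        simp [circleMap, abs_of_pos hr0, hr.2]
      calc _ = ∫⁻ r in Set.Ioo (R / 2) R, ‖h w‖ₑ ^ 2 * ENNReal.ofReal (2 * Real.pi)
            * ENNReal.ofReal (R / 2) := by
            rw [setLIntegral_const, Real.volume_Ioo]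
            congr 2
            ring
        _ ≤ ∫⁻ r in Set.Ioo (R / 2) R, _ := setLIntegral_mono' measurableSet_Ioo this
        _ ≤ _ := lintegral_mono_set (fun r hr => by
            simp only [Set.mem_Ioi]; linarith [hr.1])
    · apply Measurable.aemeasurable
      have : Measurable fun p : ℝ × ℝ => Complex.polarCoord.symm p := by
        simp only [Complex.polarCoord_symm_apply]
        fun_prop
      have h2 : Measurable fun p : ℝ × ℝ => G (w + Complex.polarCoord.symm p) :=
        hGm.comp (this.const_add w)
      exact (ENNReal.measurable_ofReal.comp measurable_fst).smul h2
  have hmain := hlow.trans hup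
  have hR' : w.re = 2 * R := by rw [hR]; ring
  rw [hR']
  by_cases hN : H2normSq h = ⊤
  · simp [hN]
  lift H2normSq h to NNReal using hN with N
  have e1 : ‖h w‖ₑ = ENNReal.ofReal ‖h w‖ := (ofReal_norm _).symm
  have e2 : (N : ENNReal) = ENNReal.ofReal N := by simp
  rw [e1, e2, ← ENNReal.ofReal_pow (norm_nonneg _), ← ENNReal.ofReal_mul (by positivity),
    ← ENNReal.ofReal_mul (by positivity), ← ENNReal.ofReal_mul (by positivity),
    ← ENNReal.ofReal_mul (by positivity), ENNReal.ofReal_le_ofReal_iff (by positivity)] at hmain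
  rw [e1, e2, ← ENNReal.ofReal_pow (norm_nonneg _), ← ENNReal.ofReal_mul (by positivity),
    show (4 : ENNReal) = ENNReal.ofReal 4 by simp, ← ENNReal.ofReal_mul (by positivity)]
  apply ENNReal.ofReal_le_ofReal
  have h5 : ‖h w‖ ^ 2 * (2 * Real.pi) * (R / 4) ≤ 2 * N := by
    have : (‖h w‖ ^ 2 * (2 * Real.pi) * (R / 4)) * R ≤ (2 * N) * R := by nlinarith
    exact le_of_mul_le_mul_right this hR0
  have h6 := Real.pi_gt_three
  have h7 : 0 ≤ ‖h w‖ ^ 2 * R := by positivity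
  nlinarith

lemma pw_bound' (h : ℂ → ℂ) (hm : MemH2 h) (w : ℂ) (hw : 0 < w.re) :
    ‖h w‖ ≤ 2 * Real.sqrt (H2normSq h).toReal * w.re ^ (-(1 / 2) : ℝ) := by
  have h1 := pw_bound h hm.1 w hw
  have hN := hm.2.ne
  lift H2normSq h to NNReal using hN with N
  have e1 : ‖h w‖ₑ = ENNReal.ofReal ‖h w‖ := (ofReal_norm _).symm
  have e2 : (N : ENNReal) = ENNReal.ofReal N := by simp
  rw [e1, e2, ← ENNReal.ofReal_pow (norm_nonneg _), ← ENNReal.ofReal_mul (by positivity),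
    show (4 : ENNReal) = ENNReal.ofReal 4 by simp, ← ENNReal.ofReal_mul (by positivity),
    ENNReal.ofReal_le_ofReal_iff (by positivity)] at h1
  rw [Real.rpow_neg hw.le, ← Real.sqrt_eq_rpow, ← div_eq_mul_inv, le_div_iff₀ (by positivity)]
  refine (sq_le_sq₀ (by positivity) (by positivity)).1 ?_
  rw [mul_pow, mul_pow, Real.sq_sqrt hw.le, Real.sq_sqrt (by positivity)]
  simp only [ENNReal.coe_toReal]
  linarith

lemma D_int (x : ℝ) (hx : 0 < x) :
    IntegrableOn (fun u : ℝ => u ^ (-(3 / 4) : ℝ) * (x + u) ^ (-(1 / 2) : ℝ)) (Set.Ioi 0) := by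
  have hmeas : Measurable (fun u : ℝ => u ^ (-(3 / 4) : ℝ) * (x + u) ^ (-(1 / 2) : ℝ)) := by
    fun_prop
  rw [← Set.Ioc_union_Ioi_eq_Ioi (zero_le_one (α := ℝ))]
  apply IntegrableOn.union
  · have h1 : IntegrableOn (fun u : ℝ => u ^ (-(3 / 4) : ℝ) * x ^ (-(1 / 2) : ℝ)) (Set.Ioc 0 1) := by
      have := (intervalIntegral.intervalIntegrable_rpow' (a := 0) (b := 1) (r := -(3 / 4))
        (by norm_num)).mul_const (x ^ (-(1 / 2) : ℝ))
      rwa [intervalIntegrable_iff_integrableOn_Ioc_of_le zero_le_one] at this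
    refine Integrable.mono' h1 hmeas.aestronglyMeasurable ?_
    filter_upwards [ae_restrict_mem measurableSet_Ioc] with u hu
    have hu0 : 0 < u := hu.1
    rw [Real.norm_of_nonneg (by positivity)]
    gcongr ?_ * ?_
    exact Real.rpow_le_rpow_of_nonpos hx (by linarith) (by norm_num)
  · have h1 : IntegrableOn (fun u : ℝ => u ^ (-(5 / 4) : ℝ)) (Set.Ioi 1) :=
      integrableOn_Ioi_rpow_of_lt (by norm_num) zero_lt_one
    refine Integrable.mono' h1 hmeas.aestronglyMeasurable ?_
    filter_upwards [ae_restrict_mem measurableSet_Ioi] with u hu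
    have hu0 : 0 < u := lt_trans zero_lt_one hu
    rw [Real.norm_of_nonneg (by positivity), show (-(5 / 4) : ℝ) = -(3 / 4) + -(1 / 2) by norm_num,
      Real.rpow_add hu0]
    gcongr ?_ * ?_
    exact Real.rpow_le_rpow_of_nonpos hu0 (by linarith) (by norm_num)

lemma mellin_bound (p : ℂ) (hp : 0 < p.re) : ∃ C : ℝ, 0 < C ∧ ∀ s : ℂ, s.re = 1 / 4 →
    ∀ h, MemH2 h → MellinConvergent (fun u : ℝ => h (p + u)) s ∧
      ‖mellin (fun u : ℝ => h (p + u)) s‖ ≤ C * Real.sqrt (H2normSq h).toReal := by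
  set D := fun u : ℝ => u ^ (-(3 / 4) : ℝ) * (p.re + u) ^ (-(1 / 2) : ℝ) with hD
  have hDi : IntegrableOn D (Set.Ioi 0) := D_int p.re hp
  refine ⟨2 * |∫ u in Set.Ioi 0, D u| + 1, by positivity, fun s hs h hm => ?_⟩
  set N := Real.sqrt (H2normSq h).toReal with hN
  have hb : ∀ u ∈ Set.Ioi (0 : ℝ), ‖(u : ℂ) ^ (s - 1) • h (p + u)‖ ≤ 2 * N * D u := by
    intro u hu
    have hu0 : 0 < u := hu
    have h1 := pw_bound' h hm (p + u) (by simp; linarith)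
    rw [norm_smul, Complex.norm_cpow_eq_rpow_re_of_pos hu0]
    have : (s - 1).re = -(3 / 4) := by simp [hs]; norm_num
    rw [this, hD]
    have e : (p + u).re = p.re + u := by simp
    rw [e] at h1
    calc _ ≤ u ^ (-(3 / 4) : ℝ) * (2 * N * (p.re + u) ^ (-(1 / 2) : ℝ)) := by gcongr
      _ = _ := by ring
  have hDi2 : IntegrableOn (fun u => 2 * N * D u) (Set.Ioi 0) := hDi.const_mul _
  have hae : ∀ᵐ u : ℝ ∂(volume.restrict (Set.Ioi (0 : ℝ))),
      ‖(u : ℂ) ^ (s - 1) • h (p + u)‖ ≤ 2 * N * D u := by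
    filter_upwards [ae_restrict_mem measurableSet_Ioi] with u hu using hb u hu
  constructor
  · refine Integrable.mono' hDi2 ?_ hae
    apply ContinuousOn.aestronglyMeasurable _ measurableSet_Ioi
    refine ContinuousOn.smul (f := fun u : ℝ => (u : ℂ) ^ (s - 1)) (g := fun u : ℝ => h (p + u)) ?_ ?_
    · intro u hu
      apply ContinuousAt.continuousWithinAt
      exact Complex.continuousAt_ofReal_cpow_const _ _ (Or.inr (ne_of_gt hu))
    · apply hm.1.continuousOn.comp (by fun_prop)
      intro u hu
      have : 0 < u := hu
      simp only [Set.mem_ofPred_eq, Complex.add_re, Complex.ofReal_re]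
      linarith
  · have := norm_integral_le_of_norm_le hDi2 hae
    rw [integral_const_mul] at this
    refine this.trans ?_
    have h0 : 0 ≤ N := Real.sqrt_nonneg _
    have := le_abs_self (∫ u in Set.Ioi 0, D u)
    nlinarith

lemma MemH2.add {f g : ℂ → ℂ} (hf : MemH2 f) (hg : MemH2 g) : MemH2 (f + g) := by
  refine ⟨hf.1.add hg.1, ?_⟩
  have : H2normSq (f + g) ≤ 2 * H2normSq f + 2 * H2normSq g := by
    refine iSup₂_le fun x hx => ?_
    have hx0 : 0 < x := hx
    have hc : Continuous fun y : ℝ => f ((x : ℂ) + (y : ℂ) * Complex.I) := by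
      rw [← continuousOn_univ]
      apply hf.1.continuousOn.comp (by fun_prop)
      intro y _
      simpa using hx0
    calc _ ≤ ∫⁻ y : ℝ, (2 * ‖f ((x : ℂ) + (y : ℂ) * Complex.I)‖ₑ ^ 2
              + 2 * ‖g ((x : ℂ) + (y : ℂ) * Complex.I)‖ₑ ^ 2) := by
            refine lintegral_mono fun y => ?_
            have h1 := enorm_add_le (f ((x : ℂ) + (y : ℂ) * Complex.I))
              (g ((x : ℂ) + (y : ℂ) * Complex.I))
            refine (pow_le_pow_left' h1 2).trans ?_
            generalize ‖f ((x : ℂ) + (y : ℂ) * Complex.I)‖ₑ = A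
            generalize ‖g ((x : ℂ) + (y : ℂ) * Complex.I)‖ₑ = B
            have h2 := ENNReal.rpow_add_le_mul_rpow_add_rpow A B (p := 2) (by norm_num)
            norm_num at h2
            rw [← mul_add]
            exact h2
      _ = 2 * (∫⁻ y : ℝ, ‖f ((x : ℂ) + (y : ℂ) * Complex.I)‖ₑ ^ 2)
          + 2 * ∫⁻ y : ℝ, ‖g ((x : ℂ) + (y : ℂ) * Complex.I)‖ₑ ^ 2 := by
            rw [lintegral_add_left, lintegral_const_mul', lintegral_const_mul']
            · simp
            · simp
            · exact (hc.measurable.enorm.pow_const 2).const_mul 2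
      _ ≤ _ := by
            gcongr
            · exact line_le f x hx0
            · exact line_le g x hx0
  exact this.trans_lt (ENNReal.add_lt_top.2
    ⟨ENNReal.mul_lt_top (by simp) hf.2, ENNReal.mul_lt_top (by simp) hg.2⟩)

lemma MemH2.smul {f : ℂ → ℂ} (hf : MemH2 f) (c : ℂ) : MemH2 (c • f) := by
  refine ⟨hf.1.const_smul c, ?_⟩
  have : H2normSq (c • f) ≤ ‖c‖ₑ ^ 2 * H2normSq f := by
    refine iSup₂_le fun x hx => ?_
    have hx0 : 0 < x := hx
    calc _ = ∫⁻ y : ℝ, ‖c‖ₑ ^ 2 * ‖f ((x : ℂ) + (y : ℂ) * Complex.I)‖ₑ ^ 2 := by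
            refine lintegral_congr fun y => ?_
            rw [← mul_pow, ← enorm_mul]
            rfl
      _ = ‖c‖ₑ ^ 2 * ∫⁻ y : ℝ, ‖f ((x : ℂ) + (y : ℂ) * Complex.I)‖ₑ ^ 2 :=
            lintegral_const_mul' _ _ (by finiteness)
      _ ≤ _ := by
            gcongr
            exact line_le f x hx0
  exact this.trans_lt (ENNReal.mul_lt_top (by finiteness) hf.2)

lemma MemH2.comp {f : ℂ → ℂ} (hf : MemH2 f) (a : ℝ) (ha0 : 0 < a) (b : ℂ) (hb : 0 < b.re)
    (φ : ℂ → ℂ) (hφ : ∀ w, φ w = (a : ℂ) * w + b) : MemH2 (f ∘ φ) := by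
  have hre : ∀ w : ℂ, 0 < w.re → 0 < (φ w).re := by
    intro w hw
    rw [hφ]
    simp
    positivity
  constructor
  · apply hf.1.comp
    · have : φ = fun w => (a : ℂ) * w + b := funext hφ
      rw [this]
      fun_prop
    · intro w hw
      exact hre w hw
  have : H2normSq (f ∘ φ) ≤ ENNReal.ofReal |a⁻¹| * H2normSq f := by
    refine iSup₂_le fun x hx => ?_
    have hx0 : 0 < x := hx
    have hx1 : 0 < a * x + b.re := by positivity
    set F : ℝ → ENNReal := fun y => ‖f (((a * x + b.re : ℝ) : ℂ) + (y : ℂ) * Complex.I)‖ₑ ^ 2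
      with hF
    have hc : Measurable F := by
      have : Continuous fun y : ℝ => f (((a * x + b.re : ℝ) : ℂ) + (y : ℂ) * Complex.I) := by
        rw [← continuousOn_univ]
        apply hf.1.continuousOn.comp (by fun_prop)
        intro y _
        simpa using hx1
      exact this.measurable.enorm.pow_const 2
    calc _ = ∫⁻ y : ℝ, F (a * y + b.im) := by
            refine lintegral_congr fun y => ?_
            simp only [hF, Function.comp, hφ]
            have e : (a : ℂ) * ((x : ℂ) + (y : ℂ) * Complex.I) + b =
                ((a * x + b.re : ℝ) : ℂ) + ((a * y + b.im : ℝ) : ℂ) * Complex.I := by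
              apply Complex.ext <;> simp
            rw [e]
            rfl
      _ = ∫⁻ y, F (y + b.im) ∂(Measure.map (a * ·) volume) := by
            rw [lintegral_map (by fun_prop) (by fun_prop)]
      _ = ENNReal.ofReal |a⁻¹| * ∫⁻ y, F y := by
            rw [Real.map_volume_mul_left ha0.ne', lintegral_smul_measure,
              lintegral_add_right_eq_self F]
            rfl
      _ ≤ _ := by
            gcongr
            exact line_le f _ hx1
  exact this.trans_lt (ENNReal.mul_lt_top (by finiteness) hf.2)

lemma memH2_test (p : ℂ) (t : ℝ) (ht : 0 < t) (n : ℕ) (hn : p.re + 1 ≤ n) :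
    MemH2 (fun w => Complex.exp (-(t * (w - p))) * (n / (w - p + n))) := by
  have hne : ∀ w : ℂ, 0 < w.re → w - p + n ≠ 0 := by
    intro w hw h0
    have := congrArg Complex.re h0
    simp at this
    linarith
  constructor
  · intro w hw
    apply DifferentiableAt.differentiableWithinAt
    have := hne w hw
    fun_prop (disch := assumption)
  set K : ℝ := Real.exp (t * p.re) * n with hK
  have : H2normSq (fun w => Complex.exp (-(t * (w - p))) * (n / (w - p + n))) ≤
      ENNReal.ofReal (K ^ 2) * ∫⁻ y : ℝ, ENNReal.ofReal ((1 + y ^ 2)⁻¹) := by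
    refine iSup₂_le fun x hx => ?_
    have hx0 : 0 < x := hx
    rw [← lintegral_add_right_eq_self (fun y : ℝ => ENNReal.ofReal ((1 + y ^ 2)⁻¹)) (-p.im),
      ← lintegral_const_mul' _ _ (by simp)]
    refine lintegral_mono fun y => ?_
    set w : ℂ := (x : ℂ) + (y : ℂ) * Complex.I with hw
    have hwre : w.re = x := by simp [hw]
    have hwim : w.im = y := by simp [hw]
    change ‖Complex.exp (-(t * (w - p))) * (n / (w - p + n))‖ₑ ^ 2 ≤ _
    rw [← ofReal_norm, ← ENNReal.ofReal_pow (norm_nonneg _), ← ENNReal.ofReal_mul (by positivity)]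
    apply ENNReal.ofReal_le_ofReal
    rw [norm_mul, norm_div, Complex.norm_exp, Complex.norm_natCast]
    have h1 : Real.exp (-(t * (w - p))).re ≤ Real.exp (t * p.re) := by
      apply Real.exp_le_exp.2
      simp [hwre]
      nlinarith
    have h2 : 1 + (y + -p.im) ^ 2 ≤ ‖w - p + n‖ ^ 2 := by
      rw [← Complex.normSq_eq_norm_sq, Complex.normSq_apply]
      simp [hwre, hwim]
      nlinarith
    have h3 : 0 < ‖w - p + n‖ := norm_pos_iff.2 (hne w (by rw [hwre]; exact hx0))
    calc _ ≤ (Real.exp (t * p.re) * (n / ‖w - p + n‖)) ^ 2 := by gcongr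
      _ = K ^ 2 * (‖w - p + n‖ ^ 2)⁻¹ := by rw [hK]; field_simp
      _ ≤ _ := by gcongr
  refine this.trans_lt (ENNReal.mul_lt_top (by finiteness) ?_)
  exact integrable_inv_one_add_sq.lintegral_lt_top

lemma mellin_test (p : ℂ) (t : ℝ) (ht : 0 < t) (s : ℂ) (hs : 0 < s.re) :
    Filter.Tendsto (fun n : ℕ => mellin (fun u : ℝ =>
      (fun w => Complex.exp (-(t * (w - p))) * (n / (w - p + n))) (p + u)) s) Filter.atTop
      (nhds ((1 / t) ^ s * Complex.Gamma s)) := by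
  rw [← Complex.integral_cpow_mul_exp_neg_mul_Ioi hs ht]
  unfold mellin
  have hint : IntegrableOn (fun u : ℝ => (u : ℂ) ^ (s - 1) * Complex.exp (-(t * u))) (Set.Ioi 0) := by
    by_contra hcon
    have h1 := Complex.integral_cpow_mul_exp_neg_mul_Ioi hs ht
    rw [integral_undef hcon] at h1
    have h2 := Complex.Gamma_ne_zero_of_re_pos hs
    have h3 : (1 / t : ℂ) ^ s ≠ 0 := by
      rw [Complex.cpow_def_of_ne_zero (by simp [ht.ne'])]
      exact Complex.exp_ne_zero _
    exact mul_ne_zero h3 h2 h1.symm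
  have hcf : ∀ n : ℕ, ContinuousOn (fun u : ℝ => (u : ℂ) ^ (s - 1) •
      (Complex.exp (-(t * (p + u - p))) * (n / (p + u - p + n)))) (Set.Ioi 0) := by
    intro n u hu
    have hu0 : 0 < u := hu
    apply ContinuousAt.continuousWithinAt
    refine ContinuousAt.smul (f := fun u : ℝ => (u : ℂ) ^ (s - 1))
      (g := fun u : ℝ => Complex.exp (-(t * (p + u - p))) * (n / (p + u - p + n))) ?_ ?_
    · exact Complex.continuousAt_ofReal_cpow_const _ _ (Or.inr (ne_of_gt hu))
    · have : p + u - p + n ≠ 0 := by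
        have h1 : (0 : ℝ) < u + n := by positivity
        rw [add_sub_cancel_left]
        exact_mod_cast h1.ne'
      fun_prop (disch := assumption)
  refine tendsto_integral_of_dominated_convergence
    (fun u => ‖(u : ℂ) ^ (s - 1) * Complex.exp (-(t * u))‖) ?_ hint.norm ?_ ?_
  · intro n
    exact (hcf n).aestronglyMeasurable measurableSet_Ioi
  · intro n
    filter_upwards [ae_restrict_mem measurableSet_Ioi] with u hu
    have hu0 : 0 < u := hu
    simp only [add_sub_cancel_left, smul_eq_mul]
    rw [← mul_assoc, norm_mul]
    apply mul_le_of_le_one_right (norm_nonneg _)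
    rw [norm_div, Complex.norm_natCast]
    have : ‖(u : ℂ) + n‖ = u + n := by
      rw [show (u : ℂ) + n = ((u + n : ℝ) : ℂ) by push_cast; rfl, Complex.norm_real,
        Real.norm_of_nonneg (by positivity)]
    rw [this]
    apply div_le_one_of_le₀ <;> [linarith; positivity]
  · filter_upwards [ae_restrict_mem measurableSet_Ioi] with u hu
    simp only [add_sub_cancel_left, smul_eq_mul]
    have h1 : Filter.Tendsto (fun n : ℕ => (n : ℂ) / (u + n)) Filter.atTop (nhds 1) := by
      have := tendsto_natCast_div_add_atTop (u : ℂ)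
      simpa [add_comm] using this
    have := (h1.const_mul (Complex.exp (-(t * u)))).const_mul ((u : ℂ) ^ (s - 1))
    simpa using this

/-- Type I hyperbolic non-automorphisms induce non-cyclic composition operators:
no `f ∈ H²(ℂ₊)` has orbit under `C_φ` with dense linear span. -/
theorem typeI_not_cyclic (a : ℝ) (ha0 : 0 < a) (ha1 : a < 1) (b : ℂ) (hb : 0 < b.re)
    (φ : ℂ → ℂ) (hφ : ∀ w, φ w = (a : ℂ) * w + b)
    (f : ℂ → ℂ) (hf : MemH2 f) :
    ∃ g : ℂ → ℂ, MemH2 g ∧ ∃ ε : ℝ, 0 < ε ∧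
      ∀ h ∈ Submodule.span ℂ (Set.range fun n : ℕ => f ∘ φ^[n]),
        ENNReal.ofReal ε ^ 2 ≤ H2normSq (g - h) := by
  set p : ℂ := b / (1 - a) with hp
  have h1a : (0 : ℝ) < 1 - a := by linarith
  have h1a' : (1 - a : ℂ) ≠ 0 := by exact_mod_cast h1a.ne'
  have hpre : 0 < p.re := by
    have : p = b / ((1 - a : ℝ) : ℂ) := by rw [hp]; push_cast; rfl
    rw [this, Complex.div_ofReal_re]
    positivity
  have hφp : ∀ u : ℝ, φ (p + u) = p + ((a * u : ℝ) : ℂ) := by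
    intro u
    rw [hφ, hp]
    push_cast
    field_simp
    ring
  obtain ⟨C, hC0, hC⟩ := mellin_bound p hpre
  have hla : Real.log a ≠ 0 := (Real.log_neg ha0 ha1).ne
  set ω : ℝ := 2 * Real.pi / Real.log a with hω
  have hω0 : ω ≠ 0 := by rw [hω]; positivity
  set s₁ : ℂ := 1 / 4 with hs₁
  set s₂ : ℂ := 1 / 4 + ω * Complex.I with hs₂
  have hr₁ : s₁.re = 1 / 4 := by simp [hs₁]
  have hr₂ : s₂.re = 1 / 4 := by simp [hs₂]
  have has : (a : ℂ) ^ (-s₂) = (a : ℂ) ^ (-s₁) := by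
    have ha' : (a : ℂ) ≠ 0 := by exact_mod_cast ha0.ne'
    have h1 : -s₂ = -s₁ + -(ω * Complex.I) := by rw [hs₁, hs₂]; ring
    rw [h1, Complex.cpow_add _ _ ha', Complex.cpow_def_of_ne_zero ha' (-(ω * Complex.I)),
      ← Complex.ofReal_log ha0.le]
    have h2 : (Real.log a : ℂ) * -(ω * Complex.I) = -(2 * Real.pi * Complex.I) := by
      have : Real.log a * ω = 2 * Real.pi := by rw [hω]; field_simp
      calc _ = -(((Real.log a * ω : ℝ) : ℂ) * Complex.I) := by push_cast; ring
        _ = _ := by rw [this]; push_cast; ring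
    rw [h2, Complex.exp_neg, Complex.exp_two_pi_mul_I]
    simp
  set L : ℂ → (ℂ → ℂ) → ℂ := fun s h => mellin (fun u : ℝ => h (p + u)) s with hL
  have hLcomp : ∀ s h, L s (h ∘ φ) = (a : ℂ) ^ (-s) * L s h := by
    intro s h
    have := mellin_comp_mul_left (fun u : ℝ => h (p + u)) s ha0
    simp only [hL, Function.comp, hφp]
    exact this
  have hLadd : ∀ s : ℂ, s.re = 1 / 4 → ∀ g h, MemH2 g → MemH2 h → L s (g + h) = L s g + L s h :=
    fun s hs g h hg hh => (hasMellin_add (hC s hs g hg).1 (hC s hs h hh).1).2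
  have hLsmul : ∀ s (c : ℂ) h, L s (c • h) = c * L s h :=
    fun s c h => mellin_const_smul (fun u : ℝ => h (p + u)) s c
  obtain ⟨α, β, hαβ, hf0⟩ : ∃ α β : ℂ, ¬ (α = 0 ∧ β = 0) ∧ α * L s₁ f + β * L s₂ f = 0 := by
    by_cases h0 : L s₁ f = 0
    · exact ⟨1, 0, by simp, by simp [h0]⟩
    · exact ⟨L s₂ f, -L s₁ f, by simp [h0], by ring⟩
  obtain ⟨g, hg, hΛg⟩ : ∃ g, MemH2 g ∧ α * L s₁ g + β * L s₂ g ≠ 0 := by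
    by_contra! hcon
    have key : ∀ t : ℝ, 0 < t → α * ((1 / t) ^ s₁ * Complex.Gamma s₁)
        + β * ((1 / t) ^ s₂ * Complex.Gamma s₂) = 0 := by
      intro t ht
      have h1 := ((mellin_test p t ht s₁ (by rw [hr₁]; norm_num)).const_mul α).add
        ((mellin_test p t ht s₂ (by rw [hr₂]; norm_num)).const_mul β)
      refine tendsto_nhds_unique h1 (Filter.Tendsto.congr' ?_ tendsto_const_nhds)
      filter_upwards [Filter.eventually_ge_atTop ⌈p.re + 1⌉₊] with n hn
      exact (hcon _ (memH2_test p t ht n (Nat.ceil_le.1 hn))).symm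
    have k1 := key 1 one_pos
    have k2 := key (Real.exp (-(Real.pi / ω))) (Real.exp_pos _)
    have hΓ₁ : Complex.Gamma s₁ ≠ 0 :=
      Complex.Gamma_ne_zero_of_re_pos (by rw [hr₁]; norm_num)
    have hΓ₂ : Complex.Gamma s₂ ≠ 0 :=
      Complex.Gamma_ne_zero_of_re_pos (by rw [hr₂]; norm_num)
    have hr : (1 / (Real.exp (-(Real.pi / ω)) : ℂ)) = ((Real.exp (Real.pi / ω) : ℝ) : ℂ) := by
      rw [Real.exp_neg]; push_cast; simp
    have hr0 : ((Real.exp (Real.pi / ω) : ℝ) : ℂ) ≠ 0 := by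
      exact_mod_cast (Real.exp_pos _).ne'
    have hrI : ((Real.exp (Real.pi / ω) : ℝ) : ℂ) ^ (ω * Complex.I) = -1 := by
      rw [Complex.cpow_def_of_ne_zero hr0, ← Complex.ofReal_log (Real.exp_pos _).le, Real.log_exp,
        ← mul_assoc, ← Complex.ofReal_mul, div_mul_cancel₀ _ hω0, Complex.exp_pi_mul_I]
    have hr1 : ((Real.exp (Real.pi / ω) : ℝ) : ℂ) ^ s₁ ≠ 0 := by
      rw [Complex.cpow_def_of_ne_zero hr0]
      exact Complex.exp_ne_zero _
    rw [hr] at k2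
    rw [show s₂ = s₁ + ω * Complex.I from rfl] at k2 hΓ₂ k1
    rw [Complex.cpow_add _ _ hr0, hrI] at k2
    simp only [Complex.ofReal_one, div_one, Complex.one_cpow, one_mul] at k1
    have k3 : α * Complex.Gamma s₁ - β * Complex.Gamma (s₁ + ω * Complex.I) = 0 := by
      apply (mul_eq_zero.1 _).resolve_left hr1
      linear_combination k2
    have k4 : α * Complex.Gamma s₁ = 0 := by linear_combination (k1 + k3) / 2
    have k5 : β * Complex.Gamma (s₁ + ω * Complex.I) = 0 := by linear_combination (k1 - k3) / 2
    exact hαβ ⟨(mul_eq_zero.1 k4).resolve_right hΓ₁, (mul_eq_zero.1 k5).resolve_right hΓ₂⟩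
  have horb : ∀ n : ℕ, MemH2 (f ∘ φ^[n]) ∧ α * L s₁ (f ∘ φ^[n]) + β * L s₂ (f ∘ φ^[n]) = 0 := by
    intro n
    induction n with
    | zero => exact ⟨hf, hf0⟩
    | succ n ih =>
      rw [Function.iterate_succ, ← Function.comp_assoc]
      refine ⟨ih.1.comp a ha0 b hb φ hφ, ?_⟩
      rw [hLcomp, hLcomp, has]
      linear_combination (a : ℂ) ^ (-s₁) * ih.2
  have hspan : ∀ h ∈ Submodule.span ℂ (Set.range fun n : ℕ => f ∘ φ^[n]),
      MemH2 h ∧ α * L s₁ h + β * L s₂ h = 0 := by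
    intro h hh
    induction hh using Submodule.span_induction with
    | mem x hx => obtain ⟨n, rfl⟩ := hx; exact horb n
    | zero =>
      have := (horb 0).1.smul 0
      rw [zero_smul] at this
      refine ⟨this, ?_⟩
      have e : ∀ s, L s 0 = 0 := fun s => by simpa using hLsmul s 0 0
      rw [e, e]; simp
    | add x y _ _ hx hy =>
      refine ⟨hx.1.add hy.1, ?_⟩
      rw [hLadd _ hr₁ _ _ hx.1 hy.1, hLadd _ hr₂ _ _ hx.1 hy.1]
      linear_combination hx.2 + hy.2
    | smul c x _ hx =>
      refine ⟨hx.1.smul c, ?_⟩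
      rw [hLsmul, hLsmul]
      linear_combination c * hx.2
  set M : ℝ := (‖α‖ + ‖β‖) * C + 1 with hM
  have hM0 : 0 < M := by positivity
  refine ⟨g, hg, ‖α * L s₁ g + β * L s₂ g‖ / M, by positivity, fun h hh => ?_⟩
  obtain ⟨hh1, hh2⟩ := hspan h hh
  have hk : MemH2 (g - h) := by
    have := hg.add (hh1.smul (-1))
    rwa [neg_one_smul, ← sub_eq_add_neg] at this
  have hkΛ : α * L s₁ g + β * L s₂ g = α * L s₁ (g - h) + β * L s₂ (g - h) := by
    have e₁ := hLadd _ hr₁ _ _ hk hh1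
    have e₂ := hLadd _ hr₂ _ _ hk hh1
    rw [sub_add_cancel] at e₁ e₂
    rw [e₁, e₂]
    linear_combination hh2
  set N := Real.sqrt (H2normSq (g - h)).toReal with hN
  have hN0 : 0 ≤ N := Real.sqrt_nonneg _
  have b₁ : ‖L s₁ (g - h)‖ ≤ C * N := (hC _ hr₁ _ hk).2
  have b₂ : ‖L s₂ (g - h)‖ ≤ C * N := (hC _ hr₂ _ hk).2
  have hle : ‖α * L s₁ g + β * L s₂ g‖ / M ≤ N := by
    rw [div_le_iff₀ hM0, hkΛ]
    calc _ ≤ ‖α‖ * ‖L s₁ (g - h)‖ + ‖β‖ * ‖L s₂ (g - h)‖ := by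
          refine (norm_add_le _ _).trans (le_of_eq ?_)
          rw [norm_mul, norm_mul]
      _ ≤ ‖α‖ * (C * N) + ‖β‖ * (C * N) := by gcongr
      _ ≤ N * M := by rw [hM]; nlinarith
  calc _ ≤ ENNReal.ofReal N ^ 2 := by gcongr
    _ = ENNReal.ofReal (H2normSq (g - h)).toReal := by
      rw [← ENNReal.ofReal_pow hN0, hN, Real.sq_sqrt ENNReal.toReal_nonneg]
    _ = H2normSq (g - h) := ENNReal.ofReal_toReal hk.2.ne
end

section
/- (Cyclicity of type II symbols.) Let a > 1 and b ∈ ℂ with Re(b) > 0, and let φ(w) = a·w + b. Then the composition operator C_φ is cyclic on H²(ℂ₊): there exists f ∈ H²(ℂ₊) such that the linear span of the orbit {f ∘ φ^[n] : n ∈ ℕ} is dense in H²(ℂ₊), i.e. for every g ∈ H²(ℂ₊) and every ε > 0 there is a finite linear combination h of the functions f ∘ φ^[n] with ‖g − h‖ < ε. -/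
open Complex MeasureTheory

lemma int_line_zero (D : ℂ → ℂ) (C : ℝ) (hc : ContinuousOn D {z : ℂ | 0 ≤ z.re})
    (hd : DifferentiableOn ℂ D {z : ℂ | 0 < z.re})
    (hb : ∀ z : ℂ, 0 ≤ z.re → ‖D z‖ ≤ C / (1 + ‖z‖ ^ 2)) :
    Integrable (fun t : ℝ => D (t * I)) ∧ ∫ t : ℝ, D (t * I) = 0 := by
  have hC : 0 ≤ C := by
    have := (norm_nonneg _).trans (hb 0 (by simp))
    simpa using this
  have hcont : Continuous (fun t : ℝ => D (t * I)) := by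
    apply hc.comp_continuous (by fun_prop)
    intro t; simp
  have hint : Integrable (fun t : ℝ => D (t * I)) := by
    refine Integrable.mono' (integrable_inv_one_add_sq.const_mul C) hcont.aestronglyMeasurable ?_
    filter_upwards with t
    have := hb (t * I) (by simp)
    simpa [div_eq_mul_inv] using this
  refine ⟨hint, ?_⟩
  have key : ∀ R : ℝ, 0 < R → ‖∫ t in (-R)..R, D (t * I)‖ ≤ 4 * C / R := by
    intro R hR
    have h := Complex.integral_boundary_rect_eq_zero_of_continuousOn_of_differentiableOn D
      (⟨0, -R⟩ : ℂ) (⟨R, R⟩ : ℂ) (by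
        apply hc.mono
        intro z hz
        have := hz.1
        simp only [Set.mem_preimage, Set.uIcc_of_le hR.le, Set.mem_Icc] at this
        exact this.1) (by
        apply hd.mono
        intro z hz
        have := hz.1
        simp only [Set.mem_preimage, min_eq_left hR.le, Set.mem_Ioo] at this
        exact this.1)
    simp only [ofReal_zero, zero_add] at h
    have bd : ∀ z : ℂ, 0 ≤ z.re → R ≤ ‖z‖ → ‖D z‖ ≤ C / R ^ 2 := by
      intro z hz hz'
      refine (hb z hz).trans ?_
      apply div_le_div_of_nonneg_left hC (by positivity)
      nlinarith
    have b1 : ‖∫ x in (0:ℝ)..R, D (x + ((-R : ℝ) : ℂ) * I)‖ ≤ C / R ^ 2 * |R - 0| := by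
      apply intervalIntegral.norm_integral_le_of_norm_le_const
      intro x hx
      rw [Set.uIoc_of_le hR.le] at hx
      apply bd
      · simpa using hx.1.le
      · refine le_trans ?_ (abs_im_le_norm _)
        simp [abs_of_pos hR]
    have b2 : ‖∫ x in (0:ℝ)..R, D (x + (R : ℂ) * I)‖ ≤ C / R ^ 2 * |R - 0| := by
      apply intervalIntegral.norm_integral_le_of_norm_le_const
      intro x hx
      rw [Set.uIoc_of_le hR.le] at hx
      apply bd
      · simpa using hx.1.le
      · refine le_trans ?_ (abs_im_le_norm _)
        simp [abs_of_pos hR]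
    have b3 : ‖∫ y in (-R)..R, D (R + (y : ℂ) * I)‖ ≤ C / R ^ 2 * |R - -R| := by
      apply intervalIntegral.norm_integral_le_of_norm_le_const
      intro x hx
      apply bd
      · simpa using hR.le
      · refine le_trans ?_ (abs_re_le_norm _)
        simp [abs_of_pos hR]
    have e : I • ∫ t in (-R)..R, D (t * I) = (∫ x in (0:ℝ)..R, D (x + ((-R : ℝ) : ℂ) * I))
       - (∫ x in (0:ℝ)..R, D (x + (R : ℂ) * I)) + I • ∫ y in (-R)..R, D (R + (y : ℂ) * I) := by
      rw [sub_eq_zero] at h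
      exact h.symm
    have e2 : ‖∫ t in (-R)..R, D (t * I)‖ = ‖I • ∫ t in (-R)..R, D (t * I)‖ := by
      rw [norm_smul]; simp
    rw [e2, e]
    refine (norm_add_le _ _).trans ?_
    rw [norm_smul, norm_I, one_mul]
    have := norm_sub_le (∫ x in (0:ℝ)..R, D (x + ((-R : ℝ) : ℂ) * I)) (∫ x in (0:ℝ)..R, D (x + (R : ℂ) * I))
    rw [sub_zero, abs_of_pos hR] at b1 b2
    rw [show R - -R = 2 * R by ring, abs_of_pos (by positivity)] at b3
    have : 4 * C / R = C / R ^ 2 * R + C / R ^ 2 * R + C / R ^ 2 * (2 * R) := by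
      field_simp; ring
    linarith
  have t1 := intervalIntegral_tendsto_integral hint Filter.tendsto_neg_atTop_atBot Filter.tendsto_id
  have t2 : Filter.Tendsto (fun R : ℝ => ∫ t in (-R)..R, D (t * I)) Filter.atTop (nhds 0) := by
    apply squeeze_zero_norm' (a := fun R : ℝ => 4 * C / R)
    · filter_upwards [Filter.eventually_gt_atTop 0] with R hR using key R hR
    · exact Filter.Tendsto.div_atTop tendsto_const_nhds Filter.tendsto_id
  exact tendsto_nhds_unique t1 t2

lemma poisson_int (w : ℂ) (hw : 0 < w.re) :
    Integrable (fun t : ℝ => (2 * w.re : ℂ) / (t * I + (starRingEnd ℂ) w) / (w - t * I)) ∧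
    ∫ t : ℝ, (2 * w.re : ℂ) / (t * I + (starRingEnd ℂ) w) / (w - t * I) = 2 * Real.pi := by
  have e : (fun t : ℝ => (2 * w.re : ℂ) / (t * I + (starRingEnd ℂ) w) / (w - t * I)) =
      fun t : ℝ => (((2 / w.re) * (1 + ((t - w.im) / w.re) ^ 2)⁻¹ : ℝ) : ℂ) := by
    funext t
    have h1 : ((t:ℂ) * I + (starRingEnd ℂ) w) * (w - t * I) = ((w.re ^ 2 + (t - w.im) ^ 2 : ℝ) : ℂ) := by
      apply Complex.ext <;> simp [pow_two] <;> ring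
    rw [div_div, h1, show (2 * w.re : ℂ) = ((2 * w.re : ℝ) : ℂ) by push_cast; rfl, ← ofReal_div]
    congr 1
    have : 0 < w.re ^ 2 + (t - w.im) ^ 2 := by positivity
    field_simp
  rw [e]
  have i0 : Integrable (fun t : ℝ => (1 + ((t - w.im) / w.re) ^ 2)⁻¹) :=
    (integrable_inv_one_add_sq.comp_div hw.ne').comp_sub_right w.im
  refine ⟨(i0.const_mul _).ofReal, ?_⟩
  rw [integral_complex_ofReal, integral_const_mul]
  rw [integral_sub_right_eq_self (fun t : ℝ => (1 + (t / w.re) ^ 2)⁻¹) w.im,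
    Measure.integral_comp_div (fun t : ℝ => (1 + t ^ 2)⁻¹), integral_univ_inv_one_add_sq]
  rw [abs_of_pos hw, smul_eq_mul]
  rw [show 2 / w.re * (w.re * Real.pi) = 2 * Real.pi by field_simp]
  push_cast; rfl

lemma add_conj_ne (z w : ℂ) (hz : 0 ≤ z.re) (hw : 0 < w.re) : z + (starRingEnd ℂ) w ≠ 0 := by
  intro h
  have := congrArg Complex.re h
  simp at this
  linarith

lemma sub_ne_of_line (w : ℂ) (hw : 0 < w.re) (t : ℝ) : w - t * I ≠ 0 := by
  intro h
  have := congrArg Complex.re h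
  simp at this
  linarith

lemma one_add_norm_le (z w : ℂ) (hz : 0 ≤ z.re) (hw : 0 < w.re) :
    1 + ‖z‖ ≤ (1 + (1 + ‖w‖) / w.re) * ‖z + w‖ := by
  have h1 : w.re ≤ ‖z + w‖ := by
    refine le_trans ?_ (re_le_norm _); simp [hz]
  have h2 : ‖z‖ ≤ ‖z + w‖ + ‖w‖ := by
    have := norm_sub_le (z + w) w; simpa using this
  have h3 : (1 + ‖w‖) ≤ (1 + ‖w‖) / w.re * ‖z + w‖ := by
    rw [div_mul_eq_mul_div, le_div_iff₀ hw]
    gcongr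
  linarith

lemma cauchy_decay (H : ℂ → ℂ) (C : ℝ) (hc : ContinuousOn H {z : ℂ | 0 ≤ z.re})
    (hd : DifferentiableOn ℂ H {z : ℂ | 0 < z.re})
    (hb : ∀ z : ℂ, 0 ≤ z.re → ‖H z‖ ≤ C / (1 + ‖z‖)) (w : ℂ) (hw : 0 < w.re) :
    ∫ t : ℝ, H (t * I) / (w - t * I) = 2 * Real.pi * H w := by
  have hC : 0 ≤ C := by
    have := (norm_nonneg _).trans (hb 0 (by simp))
    simpa using this
  set N : ℂ → ℂ := fun z => H z - H w * ((2 * w.re : ℂ) / (z + (starRingEnd ℂ) w)) with hN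
  have hNw : N w = 0 := by
    have : w + (starRingEnd ℂ) w = 2 * w.re := by rw [Complex.add_conj]; push_cast; rfl
    have h0 : (2 * w.re : ℂ) ≠ 0 := by
      rw [← this]; exact add_conj_ne w w hw.le hw
    simp [hN, this, h0]
  have hNc : ContinuousOn N {z : ℂ | 0 ≤ z.re} := by
    apply hc.sub
    apply ContinuousOn.mul continuousOn_const
    apply ContinuousOn.div continuousOn_const (by fun_prop)
    intro z hz; exact add_conj_ne z w hz hw
  have hNd : DifferentiableOn ℂ N {z : ℂ | 0 < z.re} := by
    apply hd.sub
    apply DifferentiableOn.mul (differentiableOn_const _)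
    apply DifferentiableOn.div (differentiableOn_const _) (by fun_prop)
    intro z hz; exact add_conj_ne z w (le_of_lt hz) hw
  have hopen : IsOpen {z : ℂ | 0 < z.re} := isOpen_lt continuous_const continuous_re
  have hnh : {z : ℂ | 0 < z.re} ∈ nhds w := hopen.mem_nhds hw
  have hnh' : {z : ℂ | 0 ≤ z.re} ∈ nhds w :=
    Filter.mem_of_superset hnh (fun z (hz : 0 < z.re) => hz.le)
  have hDd : DifferentiableOn ℂ (dslope N w) {z : ℂ | 0 < z.re} :=
    (Complex.differentiableOn_dslope hnh).2 hNd
  have hDc : ContinuousOn (dslope N w) {z : ℂ | 0 ≤ z.re} :=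
    (continuousOn_dslope hnh').2 ⟨hNc, hNd.differentiableAt hnh⟩
  have hDne : ∀ z, z ≠ w → dslope N w z = N z / (z - w) := by
    intro z hz
    rw [dslope_of_ne _ hz, slope_def_field, hNw, sub_zero]
  obtain ⟨C', hC'0, hNb⟩ : ∃ C' : ℝ, 0 ≤ C' ∧ ∀ z : ℂ, 0 ≤ z.re → ‖N z‖ ≤ C' / (1 + ‖z‖) := by
    set K := (1 + (1 + ‖(starRingEnd ℂ) w‖) / w.re)
    refine ⟨C + ‖H w * (2 * w.re : ℂ)‖ * K, by positivity, ?_⟩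
    intro z hz
    have h1 := hb z hz
    have h2 := one_add_norm_le z ((starRingEnd ℂ) w) hz (by simpa using hw)
    rw [conj_re] at h2
    have hpos : 0 < ‖z + (starRingEnd ℂ) w‖ := norm_pos_iff.2 (add_conj_ne z w hz hw)
    rw [add_div]
    refine (norm_sub_le _ _).trans (add_le_add h1 ?_)
    rw [← mul_div_assoc, norm_div, mul_div_assoc, div_eq_mul_inv]
    apply mul_le_mul_of_nonneg_left _ (norm_nonneg _)
    rw [inv_eq_one_div, div_le_div_iff₀ hpos (by positivity)]
    linarith
  obtain ⟨B, hB⟩ : ∃ B : ℝ, ∀ z ∈ Metric.closedBall w (w.re / 2), ‖dslope N w z * ((1 + ‖z‖ ^ 2 : ℝ) : ℂ)‖ ≤ B := by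
    apply (isCompact_closedBall w (w.re / 2)).exists_bound_of_continuousOn
    apply ContinuousOn.mul
    · apply hDc.mono
      intro z hz
      have h1 := (abs_re_le_norm (z - w)).trans (mem_closedBall_iff_norm.1 hz)
      rw [sub_re, abs_le] at h1
      simp only [Set.mem_ofPred_eq]; linarith [h1.1]
    · apply Continuous.continuousOn; fun_prop
  have hDb : ∀ z : ℂ, 0 ≤ z.re → ‖dslope N w z‖ ≤
      (max B 0 + C' * (1 + (1 + ‖w‖) / (w.re / 2))) / (1 + ‖z‖ ^ 2) := by
    intro z hz
    rw [le_div_iff₀ (by positivity)]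
    by_cases hzw : z ∈ Metric.closedBall w (w.re / 2)
    · have := hB z hzw
      rw [norm_mul, norm_real, Real.norm_of_nonneg (by positivity)] at this
      refine this.trans ((le_max_left B 0).trans ?_)
      apply le_add_of_nonneg_right; positivity
    · have hne : z ≠ w := by
        rintro rfl
        exact hzw (Metric.mem_closedBall_self (by positivity))
      have hd : w.re / 2 ≤ ‖z - w‖ := by
        rw [mem_closedBall_iff_norm, not_le] at hzw; exact hzw.le
      have hp : 0 < ‖z - w‖ := lt_of_lt_of_le (by positivity) hd
      have h2 : ‖z‖ ≤ ‖z - w‖ + ‖w‖ := by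
        have := norm_add_le (z - w) w; simpa using this
      have h3 : (1 + ‖w‖) ≤ (1 + ‖w‖) / (w.re / 2) * ‖z - w‖ := by
        rw [div_mul_eq_mul_div, le_div_iff₀ (by positivity)]
        gcongr
      have h4 : 1 + ‖z‖ ≤ (1 + (1 + ‖w‖) / (w.re / 2)) * ‖z - w‖ := by linarith
      rw [hDne z hne, norm_div]
      have h5 := hNb z hz
      have h6 : (1 + ‖z‖ ^ 2) ≤ (1 + ‖z‖) * (1 + ‖z‖) := by nlinarith [norm_nonneg z]
      calc ‖N z‖ / ‖z - w‖ * (1 + ‖z‖ ^ 2)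
          ≤ (C' / (1 + ‖z‖)) / ‖z - w‖ * ((1 + ‖z‖) * ((1 + (1 + ‖w‖) / (w.re / 2)) * ‖z - w‖)) := by
            gcongr
            exact h6.trans (by gcongr)
        _ = C' * (1 + (1 + ‖w‖) / (w.re / 2)) := by
            have : (1 + ‖z‖) ≠ 0 := by positivity
            field_simp
        _ ≤ _ := le_add_of_nonneg_left (le_max_right _ _)
  obtain ⟨i1, e1⟩ := int_line_zero _ _ hDc hDd hDb
  obtain ⟨i2, e2⟩ := poisson_int w hw
  have : ∀ t : ℝ, H (t * I) / (w - t * I) = H w * ((2 * w.re : ℂ) / (t * I + (starRingEnd ℂ) w) / (w - t * I)) - dslope N w (t * I) := by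
    intro t
    have h1 := sub_ne_of_line w hw t
    have h2 : (t : ℂ) * I - w ≠ 0 := by rw [← neg_sub]; exact neg_ne_zero.2 h1
    rw [hDne _ (sub_ne_zero.1 h2), hN, ← neg_sub w, div_neg]
    simp only []
    rw [sub_neg_eq_add, ← mul_div_assoc, ← add_div]
    congr 1; ring
  simp_rw [this]
  rw [integral_sub (i2.const_mul _) i1, e1, integral_const_mul, e2]
  ring

lemma tI_add_ne (w : ℂ) (hw : 0 < w.re) (t : ℝ) : t * I + w ≠ 0 := by
  intro h
  have := congrArg Complex.re h
  simp at this
  linarith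

lemma kernel_cont (l : ℂ) (hl : 0 < l.re) : Continuous (fun t : ℝ => ((t : ℂ) * I + l)⁻¹) := by
  apply Continuous.inv₀ (by fun_prop)
  intro t; exact tI_add_ne l hl t

lemma kernel_bound (l : ℂ) (hl : 0 < l.re) (z : ℂ) (hz : 0 ≤ z.re) :
    ‖(z + l)⁻¹‖ ≤ (1 + (1 + ‖l‖) / l.re) / (1 + ‖z‖) := by
  have h := one_add_norm_le z l hz hl
  have hpos : 0 < ‖z + l‖ := by
    refine lt_of_lt_of_le ?_ (re_le_norm _)
    simp; linarith
  rw [norm_inv, inv_eq_one_div, div_le_div_iff₀ hpos (by positivity)]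
  linarith

lemma kernel_memLp (l : ℂ) (hl : 0 < l.re) :
    MemLp (fun t : ℝ => ((t : ℂ) * I + l)⁻¹) 2 volume := by
  rw [memLp_two_iff_integrable_sq_norm (kernel_cont l hl).aestronglyMeasurable]
  set K := (1 + (1 + ‖l‖) / l.re) with hK
  have hK0 : 0 ≤ K := by positivity
  refine Integrable.mono' (integrable_inv_one_add_sq.const_mul (K ^ 2))
    (((kernel_cont l hl).norm.pow 2).aestronglyMeasurable) ?_
  filter_upwards with t
  have h := kernel_bound l hl (t * I) (by simp)
  rw [Real.norm_of_nonneg (by positivity)]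
  calc ‖((t : ℂ) * I + l)⁻¹‖ ^ 2 ≤ (K / (1 + ‖(t : ℂ) * I‖)) ^ 2 := by gcongr
    _ = K ^ 2 * ((1 + |t|) ^ 2)⁻¹ := by rw [div_pow, div_eq_mul_inv]; simp
    _ ≤ K ^ 2 * (1 + t ^ 2)⁻¹ := by
      gcongr
      nlinarith [abs_nonneg t, sq_abs t]

lemma conj_kernel (l : ℂ) (t : ℝ) :
    (starRingEnd ℂ) (((t : ℂ) * I + l)⁻¹) = ((starRingEnd ℂ) l - t * I)⁻¹ := by
  rw [map_inv₀]; congr 1; simp; ring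

lemma kernel_memLp' (w : ℂ) (hw : 0 < w.re) :
    MemLp (fun t : ℝ => (w - (t : ℂ) * I)⁻¹) 2 volume := by
  have h := (kernel_memLp ((starRingEnd ℂ) w) (by simpa using hw)).star
  refine (memLp_congr_ae ?_).1 h
  filter_upwards with t
  have := conj_kernel ((starRingEnd ℂ) w) t
  simpa using this

lemma kernel_integral (l w : ℂ) (hl : 0 < l.re) (hw : 0 < w.re) :
    ∫ t : ℝ, ((t : ℂ) * I + l)⁻¹ * (w - t * I)⁻¹ = 2 * Real.pi * (w + l)⁻¹ := by
  have hne : ∀ z : ℂ, 0 ≤ z.re → z + l ≠ 0 := by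
    intro z hz h
    have := congrArg Complex.re h
    simp at this
    linarith
  have := cauchy_decay (fun z => (z + l)⁻¹) (1 + (1 + ‖l‖) / l.re)
    (ContinuousOn.inv₀ (by fun_prop) (fun z hz => hne z hz))
    (DifferentiableOn.inv (by fun_prop) (fun z hz => hne z (le_of_lt hz)))
    (fun z hz => kernel_bound l hl z hz) w hw
  simpa only [div_eq_mul_inv] using this

lemma cauchy_L2 (H : ℂ → ℂ) (M : ℝ) (hc : ContinuousOn H {z : ℂ | 0 ≤ z.re})
    (hd : DifferentiableOn ℂ H {z : ℂ | 0 < z.re})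
    (hb : ∀ z : ℂ, 0 ≤ z.re → ‖H z‖ ≤ M)
    (h2 : MemLp (fun t : ℝ => H (t * I)) 2 volume) (w : ℂ) (hw : 0 < w.re) :
    ∫ t : ℝ, H (t * I) * (w - t * I)⁻¹ = 2 * Real.pi * H w := by
  have hM : 0 ≤ M := (norm_nonneg _).trans (hb 0 (by simp))
  have hr : ∀ n : ℕ, 0 < ((n + 1 : ℂ)).re := by intro n; simp; positivity
  have hne : ∀ (n : ℕ) (z : ℂ), 0 ≤ z.re → z + (n + 1 : ℂ) ≠ 0 := by
    intro n z hz h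
    have := congrArg Complex.re h
    simp at this
    have : (0:ℝ) ≤ n := by positivity
    linarith
  have hn : ∀ n : ℕ, ∫ t : ℝ, H (t * I) * ((n + 1 : ℂ) * ((t : ℂ) * I + (n + 1))⁻¹) / (w - t * I)
      = 2 * Real.pi * (H w * ((n + 1 : ℂ) * (w + (n + 1))⁻¹)) := by
    intro n
    apply cauchy_decay (fun z => H z * ((n + 1 : ℂ) * (z + (n + 1))⁻¹))
      (M * (‖(n + 1 : ℂ)‖ * (1 + (1 + ‖(n + 1 : ℂ)‖) / ((n + 1 : ℂ)).re))) ?_ ?_ ?_ w hw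
    · apply hc.mul
      apply ContinuousOn.mul continuousOn_const
      exact (ContinuousOn.inv₀ (by fun_prop) (fun z hz => hne n z hz))
    · apply hd.mul
      apply DifferentiableOn.mul (differentiableOn_const _)
      exact (DifferentiableOn.inv (by fun_prop) (fun z hz => hne n z (le_of_lt hz)))
    · intro z hz
      have := kernel_bound (n + 1) (hr n) z hz
      rw [norm_mul, norm_mul, mul_div_assoc, mul_div_assoc]
      gcongr
      exact hb z hz
  have hlim : ∀ z : ℂ, Filter.Tendsto (fun n : ℕ => (n + 1 : ℂ) * (z + (n + 1))⁻¹) Filter.atTop (nhds 1) := by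
    intro z
    have h1 : Filter.Tendsto (fun n : ℕ => z * ((n : ℂ) + 1)⁻¹ + 1) Filter.atTop (nhds 1) := by
      have := (tendsto_one_div_add_atTop_nhds_zero_nat (𝕜 := ℂ)).const_mul z |>.add_const 1
      simpa using this
    have h3 := h1.inv₀ one_ne_zero
    rw [inv_one] at h3
    refine h3.congr ?_
    intro n
    have : (n + 1 : ℂ) ≠ 0 := by exact_mod_cast Nat.succ_ne_zero n
    rw [show z + (n + 1 : ℂ) = (n + 1) * (z * ((n : ℂ) + 1)⁻¹ + 1) by field_simp, mul_inv, ← mul_assoc, mul_inv_cancel₀ this, one_mul]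
  have hint : Integrable (fun t : ℝ => H (t * I) * (w - (t : ℂ) * I)⁻¹) := h2.integrable_mul (kernel_memLp' w hw)
  have hcH : Continuous (fun t : ℝ => H (t * I)) := by
    apply hc.comp_continuous (by fun_prop)
    intro t; simp
  have hcw : Continuous (fun t : ℝ => (w - (t : ℂ) * I)⁻¹) :=
    Continuous.inv₀ (by fun_prop) (fun t => sub_ne_of_line w hw t)
  have L1 : Filter.Tendsto (fun n : ℕ => ∫ t : ℝ, H (t * I) * ((n + 1 : ℂ) * ((t : ℂ) * I + (n + 1))⁻¹) / (w - t * I))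
      Filter.atTop (nhds (∫ t : ℝ, H (t * I) * (w - t * I)⁻¹)) := by
    apply tendsto_integral_of_dominated_convergence (fun t : ℝ => ‖H (t * I) * (w - (t : ℂ) * I)⁻¹‖)
    · intro n
      apply Continuous.aestronglyMeasurable
      simp only [div_eq_mul_inv]
      exact (hcH.mul (continuous_const.mul (kernel_cont _ (hr n)))).mul hcw
    · exact hint.norm
    · intro n
      filter_upwards with t
      rw [div_eq_mul_inv, mul_right_comm, norm_mul]
      apply mul_le_of_le_one_right (norm_nonneg _)
      rw [norm_mul, norm_inv, ← div_eq_mul_inv]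
      have hp : 0 < ‖(t : ℂ) * I + (n + 1)‖ := norm_pos_iff.2 (tI_add_ne _ (hr n) t)
      rw [div_le_one hp]
      have e : ‖(n + 1 : ℂ)‖ = (n + 1 : ℝ) := by
        rw [show (n + 1 : ℂ) = ((n + 1 : ℝ) : ℂ) by push_cast; rfl, norm_real, Real.norm_of_nonneg (by positivity)]
      rw [e]
      refine le_trans ?_ (re_le_norm _)
      simp
    · filter_upwards with t
      have := ((hlim (t * I)).const_mul (H (t * I))).mul_const ((w - (t : ℂ) * I)⁻¹)
      simpa only [div_eq_mul_inv, mul_one] using this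
  have L2 : Filter.Tendsto (fun n : ℕ => 2 * Real.pi * (H w * ((n + 1 : ℂ) * (w + (n + 1))⁻¹))) Filter.atTop (nhds (2 * Real.pi * H w)) := by
    have := ((hlim w).const_mul (H w)).const_mul (2 * Real.pi : ℂ)
    simpa only [mul_one] using this
  simp_rw [hn] at L1
  exact tendsto_nhds_unique L1 L2

lemma norm_sum_formula (s : Finset ℕ) (c l : ℕ → ℂ) (hl : ∀ i, 0 < (l i).re) :
    ∫ t : ℝ, ‖∑ i ∈ s, c i * ((t : ℂ) * I + l i)⁻¹‖ ^ 2 =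
      2 * Real.pi * ∫ u in Set.Ioi (0 : ℝ), ‖∑ i ∈ s, c i * Complex.exp (-(l i) * u)‖ ^ 2 := by
  have hcl : ∀ i, 0 < ((starRingEnd ℂ) (l i)).re := by intro i; simpa using hl i
  apply ofReal_injective
  rw [ofReal_mul, ← integral_complex_ofReal, ← integral_complex_ofReal]
  have sq : ∀ z : ℂ, ((‖z‖ ^ 2 : ℝ) : ℂ) = z * (starRingEnd ℂ) z := by
    intro z; rw [Complex.mul_conj']; push_cast; rfl
  simp_rw [sq, map_sum, Finset.sum_mul_sum, map_mul, conj_kernel]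
  have mm : ∀ (i j : ℕ) (b d : ℂ), c i * b * ((starRingEnd ℂ) (c j) * d) = c i * (starRingEnd ℂ) (c j) * (b * d) :=
    fun i j b d => mul_mul_mul_comm _ _ _ _
  simp_rw [mm]
  have i1 : ∀ i j, Integrable (fun t : ℝ => c i * (starRingEnd ℂ) (c j) * (((t : ℂ) * I + l i)⁻¹ * ((starRingEnd ℂ) (l j) - t * I)⁻¹)) := by
    intro i j
    exact ((kernel_memLp _ (hl i)).integrable_mul (kernel_memLp' _ (hcl j))).const_mul _
  have hre : ∀ i j, (-(l i) + -(starRingEnd ℂ) (l j)).re < 0 := by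
    intro i j
    have := hl i
    have := hl j
    simp
    linarith
  have ee : ∀ i j (u : ℝ), Complex.exp (-(l i) * u) * (starRingEnd ℂ) (Complex.exp (-(l j) * u))
      = Complex.exp ((-(l i) + -(starRingEnd ℂ) (l j)) * u) := by
    intro i j u
    rw [← Complex.exp_conj, ← Complex.exp_add]
    congr 1
    simp; ring
  have i2 : ∀ i j, Integrable (fun u : ℝ => c i * (starRingEnd ℂ) (c j) * (Complex.exp (-(l i) * u) * (starRingEnd ℂ) (Complex.exp (-(l j) * u)))) (volume.restrict (Set.Ioi 0)) := by
    intro i j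
    simp_rw [ee]
    exact (integrableOn_exp_mul_complex_Ioi (hre i j) 0).const_mul _
  rw [integral_finsetSum _ (fun i _ => integrable_finsetSum _ (fun j _ => i1 i j)),
    integral_finsetSum _ (fun i _ => integrable_finsetSum _ (fun j _ => i2 i j)), Finset.mul_sum]
  refine Finset.sum_congr rfl (fun i _ => ?_)
  rw [integral_finsetSum _ (fun j _ => i1 i j), integral_finsetSum _ (fun j _ => i2 i j), Finset.mul_sum]
  refine Finset.sum_congr rfl (fun j _ => ?_)
  rw [integral_const_mul, integral_const_mul, kernel_integral _ _ (hl i) (hcl j)]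
  simp_rw [ee]
  rw [integral_exp_mul_complex_Ioi (hre i j)]
  have : ((starRingEnd ℂ) (l j) + l i)⁻¹ = -Complex.exp ((-(l i) + -(starRingEnd ℂ) (l j)) * (0:ℝ)) / (-(l i) + -(starRingEnd ℂ) (l j)) := by
    rw [show (-(l i) + -(starRingEnd ℂ) (l j)) = -((starRingEnd ℂ) (l j) + l i) by ring]
    rw [ofReal_zero, mul_zero, Complex.exp_zero, neg_div_neg_eq, one_div]
  rw [this]
  push_cast
  ring

lemma norm_sum_mono (s : Finset ℕ) (c l : ℕ → ℂ) (hl : ∀ i, 0 < (l i).re) (x : ℝ) (hx : 0 < x) :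
    ∫ t : ℝ, ‖∑ i ∈ s, c i * ((x + (t : ℂ) * I) + l i)⁻¹‖ ^ 2 ≤
    ∫ t : ℝ, ‖∑ i ∈ s, c i * ((t : ℂ) * I + l i)⁻¹‖ ^ 2 := by
  have h1 := norm_sum_formula s c (fun i => l i + x) (by intro i; simp; linarith [hl i])
  have h0 := norm_sum_formula s c l hl
  have e : ∀ (t : ℝ) i, ((x + (t : ℂ) * I) + l i) = (t : ℂ) * I + (l i + x) := by intros; ring
  simp_rw [e]
  rw [h0, h1]
  apply mul_le_mul_of_nonneg_left _ (by positivity)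
  apply integral_mono_of_nonneg
  · filter_upwards with t; positivity
  · have : MemLp (fun u : ℝ => ∑ i ∈ s, c i * Complex.exp (-(l i) * u)) 2 (volume.restrict (Set.Ioi 0)) := by
      apply memLp_finsetSum
      intro i _
      apply MemLp.const_mul
      rw [memLp_two_iff_integrable_sq_norm (by apply Continuous.aestronglyMeasurable; fun_prop)]
      have h := (integrableOn_exp_mul_complex_Ioi (a := -(l i) * 2) (by simp; linarith [hl i]) 0).norm
      refine h.congr ?_
      filter_upwards with u
      rw [Complex.norm_exp, Complex.norm_exp, ← Real.exp_nat_mul]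
      congr 1
      simp; ring
    exact (memLp_two_iff_integrable_sq_norm this.1).1 this
  · rw [Filter.EventuallyLE, ae_restrict_iff' measurableSet_Ioi]
    filter_upwards with u hu
    have : ∑ i ∈ s, c i * Complex.exp (-(l i + x) * u) = (∑ i ∈ s, c i * Complex.exp (-(l i) * u)) * Complex.exp (((-(x * u) : ℝ)) : ℂ) := by
      rw [Finset.sum_mul]
      refine Finset.sum_congr rfl (fun i _ => ?_)
      rw [mul_assoc, ← Complex.exp_add]
      congr 2
      push_cast; ring
    simp only [this]
    gcongr
    rw [norm_mul, Complex.norm_exp, ofReal_re]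
    apply mul_le_of_le_one_right (norm_nonneg _)
    rw [Real.exp_le_one_iff]
    have : 0 < x * u := mul_pos hx hu
    linarith

/-- The kernel `1/(it + l)` as an element of `L²(ℝ)`. -/
noncomputable def Kv (l : ℂ) (hl : 0 < l.re) : Lp ℂ 2 (volume : Measure ℝ) :=
  (kernel_memLp l hl).toLp _

lemma inner_Kv (l : ℂ) (hl : 0 < l.re) (p : Lp ℂ 2 (volume : Measure ℝ)) :
    inner ℂ (Kv l hl) p = ∫ t : ℝ, p t * ((starRingEnd ℂ) l - t * I)⁻¹ := by
  rw [L2.inner_def]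
  apply integral_congr_ae
  filter_upwards [(kernel_memLp l hl).coeFn_toLp] with t ht
  rw [Kv, ht, ← conj_kernel]
  simp [mul_comm]

lemma inner_Kv_Kv (l w : ℂ) (hl : 0 < l.re) (hw : 0 < w.re) :
    inner ℂ (Kv w hw) (Kv l hl) = 2 * Real.pi * ((starRingEnd ℂ) w + l)⁻¹ := by
  rw [inner_Kv, ← kernel_integral l _ hl (by simpa using hw)]
  apply integral_congr_ae
  filter_upwards [(kernel_memLp l hl).coeFn_toLp] with t ht
  rw [Kv, ht]

lemma Lp_norm_sq (f : ℝ → ℂ) (hf : MemLp f 2 volume) :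
    ENNReal.ofReal (‖hf.toLp f‖ ^ 2) = ∫⁻ t, ‖f t‖ₑ ^ 2 := by
  rw [Lp.norm_toLp, ENNReal.ofReal_pow ENNReal.toReal_nonneg, ENNReal.ofReal_toReal hf.2.ne]
  have := eLpNorm_nnreal_pow_eq_lintegral (f := f) (μ := (volume : Measure ℝ)) (p := 2) (by norm_num)
  simpa using this

lemma inner_differentiable (u : Lp ℂ 2 (volume : Measure ℝ)) :
    DifferentiableOn ℂ (fun w : ℂ => ∫ t : ℝ, (starRingEnd ℂ) (u t) * ((t : ℂ) * I + w)⁻¹) {w : ℂ | 0 < w.re} := by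
  intro w0 (hw0 : 0 < w0.re)
  apply DifferentiableAt.differentiableWithinAt
  set r := w0.re / 2 with hr
  have hr0 : 0 < r := by positivity
  have hu : MemLp (fun t => (starRingEnd ℂ) (u t)) 2 volume := (Lp.memLp u).star
  have hball : ∀ w ∈ Metric.ball w0 r, r ≤ w.re := by
    intro w hw
    have h1 := (abs_re_le_norm (w - w0)).trans (mem_ball_iff_norm.1 hw).le
    rw [sub_re, abs_le] at h1
    linarith [h1.1]
  have := hasDerivAt_integral_of_dominated_loc_of_deriv_le (μ := (volume : Measure ℝ)) (𝕜 := ℂ)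
    (F := fun (w : ℂ) (t : ℝ) => (starRingEnd ℂ) (u t) * ((t : ℂ) * I + w)⁻¹)
    (F' := fun (w : ℂ) (t : ℝ) => (starRingEnd ℂ) (u t) * (-1 / ((t : ℂ) * I + w) ^ 2))
    (x₀ := w0) (s := Metric.ball w0 r)
    (bound := fun t => 2 / r * ‖(starRingEnd ℂ) (u t) * ((t : ℂ) * I + w0)⁻¹‖)
    (Metric.ball_mem_nhds _ hr0) ?_ ?_ ?_ ?_ ?_ ?_
  · exact this.2.differentiableAt
  · filter_upwards [Metric.ball_mem_nhds w0 hr0] with w hw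
    exact hu.1.mul (kernel_cont w (hr0.trans_le (hball w hw))).aestronglyMeasurable
  · exact hu.integrable_mul (kernel_memLp w0 hw0)
  · apply hu.1.mul
    apply Continuous.aestronglyMeasurable
    apply Continuous.div continuous_const (by fun_prop)
    intro t
    exact pow_ne_zero _ (tI_add_ne w0 hw0 t)
  · filter_upwards with t w hw
    have h1 := hball w hw
    have hp : r ≤ ‖(t : ℂ) * I + w‖ := by
      refine le_trans ?_ (re_le_norm _); simpa using h1
    have hp0 : 0 < ‖(t : ℂ) * I + w0‖ := norm_pos_iff.2 (tI_add_ne w0 hw0 t)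
    have h2 : ‖(t : ℂ) * I + w0‖ ≤ 2 * ‖(t : ℂ) * I + w‖ := by
      have h3 := norm_sub_le ((t : ℂ) * I + w) (w - w0)
      have h4 := (mem_ball_iff_norm.1 hw).le
      rw [show (t : ℂ) * I + w - (w - w0) = t * I + w0 by ring] at h3
      linarith
    rw [norm_mul, norm_mul, mul_left_comm]
    gcongr
    rw [norm_div, norm_neg, norm_one, norm_pow, norm_inv, div_le_iff₀ (by nlinarith)]
    rw [div_mul_eq_mul_div, div_mul_eq_mul_div, le_div_iff₀ hr0]
    rw [mul_assoc, mul_left_comm, ← div_eq_inv_mul, le_div_iff₀ hp0]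
    nlinarith
  · exact (hu.integrable_mul (kernel_memLp w0 hw0)).norm.const_mul _
  · filter_upwards with t w hw
    have h1 := hball w hw
    have h2 := tI_add_ne w (hr0.trans_le h1) t
    have h3 : HasDerivAt (fun w : ℂ => (t : ℂ) * I + w) 1 w := (hasDerivAt_id w).const_add _
    exact (h3.inv h2).const_mul _

lemma inner_zero (u : Lp ℂ 2 (volume : Measure ℝ)) (l : ℕ → ℂ) (hl : ∀ n, 0 < (l n).re) (c : ℂ)
    (hc : 0 < c.re) (hlc : ∀ n, l n ≠ c) (hlim : Filter.Tendsto l Filter.atTop (nhds c))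
    (h0 : ∀ n, inner ℂ (Kv (l n) (hl n)) u = 0) (w : ℂ) (hw : 0 < w.re) :
    inner ℂ (Kv w hw) u = 0 := by
  have hopen : IsOpen {z : ℂ | 0 < z.re} := isOpen_lt continuous_const continuous_re
  have heq : ∀ w (hw : 0 < w.re), (starRingEnd ℂ) (inner ℂ (Kv w hw) u) = ∫ t : ℝ, (starRingEnd ℂ) (u t) * ((t : ℂ) * I + w)⁻¹ := by
    intro w hw
    rw [inner_Kv, ← integral_conj]
    congr 1
    ext t
    rw [map_mul, ← conj_kernel, Complex.conj_conj]
  have han := (inner_differentiable u).analyticOnNhd hopen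
  have hpre : IsPreconnected {z : ℂ | 0 < z.re} := (convex_halfSpace_re_gt 0).isPreconnected
  have := han.eqOn_zero_of_preconnected_of_frequently_eq_zero hpre (z₀ := c) hc ?_
  · have h1 := this hw
    beta_reduce at h1
    rw [← heq w hw] at h1
    exact (map_eq_zero (starRingEnd ℂ)).1 h1
  · have ht : Filter.Tendsto l Filter.atTop (nhdsWithin c {c}ᶜ) :=
      tendsto_nhdsWithin_iff.2 ⟨hlim, Filter.Eventually.of_forall hlc⟩
    refine ht.frequently (Filter.Eventually.frequently (Filter.Eventually.of_forall ?_))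
    intro n
    rw [← heq _ (hl n), h0 n, map_zero]

lemma circle_sq_le (g : ℂ → ℂ) (hg : DifferentiableOn ℂ g {w : ℂ | 0 < w.re}) (z : ℂ) (ρ : ℝ)
    (hρ : 0 < ρ) (hz : ρ < z.re) :
    ENNReal.ofReal (2 * Real.pi) * ‖g z‖ₑ ^ 2 ≤
      ∫⁻ θ in Set.Ioo (-Real.pi) Real.pi, ‖g (circleMap z ρ θ)‖ₑ ^ 2 := by
  have hsub : Metric.closedBall z ρ ⊆ {w : ℂ | 0 < w.re} := by
    intro w hw
    have h1 := (abs_re_le_norm (w - z)).trans (mem_closedBall_iff_norm.1 hw)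
    rw [sub_re, abs_le] at h1
    show 0 < w.re
    linarith [h1.1]
  have hd : DiffContOnCl ℂ (fun w => g w ^ 2) (Metric.ball z |ρ|) := by
    rw [abs_of_pos hρ]
    apply DifferentiableOn.diffContOnCl
    rw [closure_ball z hρ.ne']
    exact (hg.mono hsub).pow 2
  have h := hd.circleAverage
  rw [Real.circleAverage_def] at h
  have hper : Function.Periodic (fun θ : ℝ => g (circleMap z ρ θ) ^ 2) (2 * Real.pi) := by
    intro θ
    simp only [(periodic_circleMap z ρ) θ]
  have h2 := hper.intervalIntegral_add_eq (-Real.pi) 0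
  rw [zero_add] at h2
  rw [← h2] at h
  have h3 : ∫ θ in (-Real.pi)..(-Real.pi + 2 * Real.pi), g (circleMap z ρ θ) ^ 2 = (2 * Real.pi : ℝ) • g z ^ 2 := by
    rw [← h, smul_smul, mul_inv_cancel₀ (by positivity), one_smul]
  rw [show -Real.pi + 2 * Real.pi = Real.pi by ring, intervalIntegral.integral_of_le (by linarith [Real.pi_pos]),
    integral_Ioc_eq_integral_Ioo] at h3
  have h4 := enorm_integral_le_lintegral_enorm (μ := volume.restrict (Set.Ioo (-Real.pi) Real.pi)) (fun θ : ℝ => g (circleMap z ρ θ) ^ 2)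
  rw [h3, enorm_smul, enorm_pow, Real.enorm_of_nonneg (by positivity)] at h4
  simpa only [enorm_pow] using h4

lemma H2_bounded (g : ℂ → ℂ) (hg : MemH2 g) (δ : ℝ) (hδ : 0 < δ) :
    ∃ M : ℝ, ∀ z : ℂ, δ ≤ z.re → ‖g z‖ ≤ M := by
  obtain ⟨hd, hfin⟩ := hg
  classical
  set U : Set ℂ := {w : ℂ | 0 < w.re} with hU
  have hopen : IsOpen U := isOpen_lt continuous_const continuous_re
  set G : ℂ → ℂ := U.piecewise g 0 with hG
  have hGm : Measurable G := hd.continuousOn.measurable_piecewise continuousOn_const hopen.measurableSet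
  have hGe : ∀ w : ℂ, 0 < w.re → G w = g w := by
    intro w hw; exact Set.piecewise_eq_of_mem _ _ _ hw
  set r := δ / 2 with hr
  have hr0 : 0 < r := by positivity
  set cst : ENNReal := ENNReal.ofReal (r / 2) * ENNReal.ofReal (2 * Real.pi) * ENNReal.ofReal (r / 2) with hcst
  have hcst0 : cst ≠ 0 := by
    have := Real.pi_pos
    simp only [hcst, ne_eq, mul_eq_zero, ENNReal.ofReal_eq_zero, not_or, not_le]
    refine ⟨⟨?_, ?_⟩, ?_⟩ <;> positivity
  have hcstt : cst ≠ ⊤ := by finiteness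
  have key : ∀ z : ℂ, δ ≤ z.re → cst * ‖g z‖ₑ ^ 2 ≤ H2normSq g * ENNReal.ofReal (2 * r) := by
    intro z hz
    set F : ℂ → ENNReal := (Metric.ball (0:ℂ) r).indicator (fun ζ => ‖G (z + ζ)‖ₑ ^ 2) with hF
    have hFm : Measurable F := by
      apply Measurable.indicator _ Metric.isOpen_ball.measurableSet
      exact ((hGm.comp (measurable_const_add z)).enorm).pow_const 2
    have lower : cst * ‖g z‖ₑ ^ 2 ≤ ∫⁻ ζ, F ζ := by
      rw [← Complex.lintegral_comp_polarCoord_symm]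
      have hm : Measurable (fun p : ℝ × ℝ => ENNReal.ofReal p.1 • F (Complex.polarCoord.symm p)) := by
        simp only [smul_eq_mul]
        apply Measurable.mul (by fun_prop)
        apply hFm.comp
        have : (fun p : ℝ × ℝ => (Complex.polarCoord.symm p : ℂ)) = fun p => (p.1 : ℂ) * (Real.cos p.2 + Real.sin p.2 * I) := by
          funext p; exact Complex.polarCoord_symm_apply p
        show Measurable (fun p : ℝ × ℝ => (Complex.polarCoord.symm p : ℂ))
        rw [this]; fun_prop
      rw [polarCoord_target, Measure.volume_eq_prod, ← Measure.prod_restrict, lintegral_prod _ hm.aemeasurable]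
      calc cst * ‖g z‖ₑ ^ 2 = ∫⁻ ρ in Set.Ioo (r / 2) r, ENNReal.ofReal (r / 2) * (ENNReal.ofReal (2 * Real.pi) * ‖g z‖ₑ ^ 2) := by
            rw [setLIntegral_const, Real.volume_Ioo, hcst, show r - r / 2 = r / 2 by ring]; ring
        _ ≤ ∫⁻ ρ in Set.Ioo (r / 2) r, ∫⁻ θ in Set.Ioo (-Real.pi) Real.pi, ENNReal.ofReal ρ • F (Complex.polarCoord.symm (ρ, θ)) := by
            apply setLIntegral_mono' measurableSet_Ioo
            intro ρ hρ
            have hρ0 : 0 < ρ := by linarith [hρ.1]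
            simp only [smul_eq_mul]
            rw [lintegral_const_mul']
            swap
            · finiteness
            gcongr
            · exact hρ.1.le
            · refine (circle_sq_le g hd z ρ hρ0 (by linarith [hρ.2])).trans (le_of_eq ?_)
              congr 1
              ext θ
              have e : (Complex.polarCoord.symm (ρ, θ) : ℂ) = ρ * Complex.exp (θ * I) := by
                rw [Complex.polarCoord_symm_apply, Complex.exp_mul_I]; push_cast; rfl
              have n : ‖(ρ : ℂ) * Complex.exp (θ * I)‖ = ρ := by
                rw [norm_mul, Complex.norm_exp_ofReal_mul_I, norm_real, Real.norm_of_nonneg hρ0.le, mul_one]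
              rw [hF, Set.indicator_of_mem, e, hGe, circleMap]
              · have := (abs_re_le_norm ((ρ : ℂ) * Complex.exp (θ * I)))
                rw [n, abs_le] at this
                rw [add_re]
                linarith [this.1, hρ.2]
              · rw [mem_ball_zero_iff, e, n]; exact hρ.2
        _ ≤ _ := by
            apply lintegral_mono_set
            intro ρ hρ
            exact lt_trans (by positivity) hρ.1
    have upper : ∫⁻ ζ, F ζ ≤ H2normSq g * ENNReal.ofReal (2 * r) := by
      rw [← (Complex.volume_preserving_equiv_real_prod.symm _).lintegral_comp hFm, Measure.volume_eq_prod,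
        lintegral_prod (fun a => F (Complex.measurableEquivRealProd.symm a)) (hFm.comp (Complex.measurableEquivRealProd.symm.measurable)).aemeasurable]
      calc _ ≤ ∫⁻ x : ℝ, (Set.Ioo (-r) r).indicator (fun _ => H2normSq g) x := by
            apply lintegral_mono
            intro x
            by_cases hx : x ∈ Set.Ioo (-r) r
            · rw [Set.indicator_of_mem hx]
              have hp : 0 < z.re + x := by linarith [hx.1]
              calc _ ≤ ∫⁻ y : ℝ, ‖g (((z.re + x : ℝ) : ℂ) + ((z.im + y : ℝ) : ℂ) * I)‖ₑ ^ 2 := by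
                    apply lintegral_mono
                    intro y
                    refine (Set.indicator_le_self _ _ _).trans (le_of_eq ?_)
                    have e : z + Complex.measurableEquivRealProd.symm (x, y) = ((z.re + x : ℝ) : ℂ) + ((z.im + y : ℝ) : ℂ) * I := by
                      apply Complex.ext <;> simp
                    simp only []
                    rw [e, hGe]
                    simpa using hp
                _ = ∫⁻ y : ℝ, ‖g (((z.re + x : ℝ) : ℂ) + (y : ℂ) * I)‖ₑ ^ 2 :=
                    lintegral_add_left_eq_self (fun y : ℝ => ‖g (((z.re + x : ℝ) : ℂ) + (y : ℂ) * I)‖ₑ ^ 2) z.im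
                _ ≤ _ := le_iSup₂ (f := fun (x : ℝ) (_ : x ∈ Set.Ioi (0:ℝ)) => ∫⁻ y : ℝ, (‖g ((x : ℂ) + (y : ℂ) * Complex.I)‖₊ : ENNReal) ^ 2) (z.re + x) hp
            · rw [Set.indicator_of_notMem hx]
              apply le_of_eq
              rw [lintegral_eq_zero_iff (by exact hFm.comp (by fun_prop))]
              filter_upwards with y
              apply Set.indicator_of_notMem
              intro hb
              apply hx
              rw [mem_ball_zero_iff] at hb
              have := (abs_re_le_norm _).trans_lt hb
              simpa [abs_lt] using this
        _ = _ := by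
            rw [lintegral_indicator measurableSet_Ioo, setLIntegral_const, Real.volume_Ioo]
            congr 2; ring
    exact lower.trans upper
  set T := H2normSq g * ENNReal.ofReal (2 * r) / cst with hT
  have hTt : T ≠ ⊤ := ENNReal.div_ne_top (ENNReal.mul_ne_top hfin.ne ENNReal.ofReal_ne_top) hcst0
  refine ⟨1 + T.toReal, fun z hz => ?_⟩
  have h1 : ‖g z‖ₑ ^ 2 ≤ T := by
    rw [hT, ENNReal.le_div_iff_mul_le (Or.inl hcst0) (Or.inl hcstt), mul_comm]
    exact key z hz
  have h2 : ‖g z‖ ^ 2 ≤ T.toReal := by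
    have := ENNReal.toReal_mono hTt h1
    simpa using this
  nlinarith [norm_nonneg (g z)]

lemma weak_limit (g : ℂ → ℂ) (hg : MemH2 g) :
    ∃ v : Lp ℂ 2 (volume : Measure ℝ), ∀ (w : ℂ) (hw : 0 < w.re),
      inner ℂ (Kv w hw) v = 2 * Real.pi * g ((starRingEnd ℂ) w) := by
  have hd := hg.1
  have hfin := hg.2
  have hopen : IsOpen {w : ℂ | 0 < w.re} := isOpen_lt continuous_const continuous_re
  have hdp : ∀ n : ℕ, (0 : ℝ) < 1 / (n + 1 : ℝ) := fun n => by positivity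
  set d : ℕ → ℝ := fun n => 1 / (n + 1 : ℝ) with hdd
  have hc : ∀ n, ContinuousOn (fun z => g (z + d n)) {z : ℂ | 0 ≤ z.re} := by
    intro n
    apply hd.continuousOn.comp (by fun_prop)
    intro z (hz : 0 ≤ z.re)
    show 0 < (z + d n).re
    simp only [add_re, ofReal_re]; linarith [hdp n]
  have hdf : ∀ n, DifferentiableOn ℂ (fun z => g (z + d n)) {z : ℂ | 0 < z.re} := by
    intro n
    apply hd.comp (by fun_prop)
    intro z (hz : 0 < z.re)
    show 0 < (z + d n).re
    simp only [add_re, ofReal_re]; linarith [hdp n]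
  have hcl : ∀ n, Continuous (fun t : ℝ => g (t * I + d n)) := by
    intro n
    apply (hc n).comp_continuous (f := fun t : ℝ => (t : ℂ) * I) (by fun_prop)
    intro t; simp
  have hle : ∀ n, ∫⁻ t : ℝ, ‖g (t * I + d n)‖ₑ ^ 2 ≤ H2normSq g := by
    intro n
    have := le_iSup₂ (f := fun (x : ℝ) (_ : x ∈ Set.Ioi (0:ℝ)) => ∫⁻ y : ℝ, (‖g ((x : ℂ) + (y : ℂ) * Complex.I)‖₊ : ENNReal) ^ 2) (d n) (hdp n)
    simp_rw [add_comm _ ((d n : ℝ) : ℂ)]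
    exact this
  have hmem : ∀ n, MemLp (fun t : ℝ => g (t * I + d n)) 2 volume := by
    intro n
    refine ⟨(hcl n).aestronglyMeasurable, ?_⟩
    have h := eLpNorm_nnreal_pow_eq_lintegral (f := fun t : ℝ => g (t * I + d n)) (μ := (volume : Measure ℝ)) (p := 2) (by norm_num)
    have h' : eLpNorm (fun t : ℝ => g (t * I + d n)) 2 volume ^ 2 = ∫⁻ t : ℝ, ‖g (t * I + d n)‖ₑ ^ 2 := by
      simpa using h
    have h2 := (hle n).trans_lt hfin
    rw [← h'] at h2
    exact (ENNReal.pow_lt_top_iff.1 h2).resolve_right (by norm_num)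
  set X : ℕ → Lp ℂ 2 (volume : Measure ℝ) := fun n => (hmem n).toLp _ with hX
  have hXn : ∀ n, ‖X n‖ ≤ 1 + (H2normSq g).toReal := by
    intro n
    have h := Lp_norm_sq _ (hmem n)
    have h2 := hle n
    rw [← h] at h2
    have h3 := (ENNReal.ofReal_le_iff_le_toReal hfin.ne).1 h2
    have h4 : ‖X n‖ ^ 2 ≤ (H2normSq g).toReal := h3
    nlinarith [norm_nonneg (X n)]
  have hin : ∀ n (w : ℂ) (hw : 0 < w.re), inner ℂ (Kv w hw) (X n) = 2 * Real.pi * g ((starRingEnd ℂ) w + d n) := by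
    intro n w hw
    obtain ⟨M, hM⟩ := H2_bounded g hg (d n) (hdp n)
    rw [inner_Kv, ← cauchy_L2 (fun z => g (z + d n)) M (hc n) (hdf n) (fun z hz => hM _ (by simpa using hz)) (hmem n) _ (by simpa using hw)]
    apply integral_congr_ae
    filter_upwards [(hmem n).coeFn_toLp] with t ht
    rw [hX, ht]
  let Y : ℕ → WeakDual ℂ (Lp ℂ 2 (volume : Measure ℝ)) :=
    fun n => StrongDual.toWeakDual (InnerProductSpace.toDual ℂ _ (X n))
  have hcomp := WeakDual.isCompact_closedBall (𝕜 := ℂ) (E := Lp ℂ 2 (volume : Measure ℝ)) 0 (1 + (H2normSq g).toReal)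
  obtain ⟨ℓ, -, hℓ⟩ := hcomp.ultrafilter_le_nhds ((Filter.hyperfilter ℕ).map Y) (by
    rw [Filter.le_principal_iff]
    apply Filter.mem_map.2
    apply Filter.univ_mem'
    intro n
    show InnerProductSpace.toDual ℂ _ (X n) ∈ Metric.closedBall 0 _
    rw [mem_closedBall_zero_iff, LinearIsometryEquiv.norm_map]
    exact hXn n)
  have hℓ' : Filter.Tendsto Y (Filter.hyperfilter ℕ) (nhds ℓ) := hℓ
  refine ⟨(InnerProductSpace.toDual ℂ _).symm (WeakDual.toStrongDual ℓ), fun w hw => ?_⟩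
  have t1 : Filter.Tendsto (fun n => inner ℂ (X n) (Kv w hw)) (Filter.hyperfilter ℕ) (nhds (ℓ (Kv w hw))) :=
    ((WeakDual.eval_continuous (Kv w hw)).tendsto ℓ).comp hℓ'
  have t2 : Filter.Tendsto (fun n => inner ℂ (Kv w hw) (X n)) (Filter.hyperfilter ℕ) (nhds ((starRingEnd ℂ) (ℓ (Kv w hw)))) := by
    have := (Complex.continuous_conj.tendsto _).comp t1
    refine this.congr ?_
    intro n
    exact inner_conj_symm _ _
  have t3 : Filter.Tendsto (fun n => inner ℂ (Kv w hw) (X n)) Filter.atTop (nhds (2 * Real.pi * g ((starRingEnd ℂ) w))) := by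
    simp_rw [hin]
    apply Filter.Tendsto.const_mul
    have hw' : 0 < ((starRingEnd ℂ) w).re := by simpa using hw
    have hca := hd.continuousOn.continuousAt (hopen.mem_nhds hw')
    apply hca.tendsto.comp
    have h0 : Filter.Tendsto d Filter.atTop (nhds 0) := tendsto_one_div_add_atTop_nhds_zero_nat
    have := ((continuous_ofReal.tendsto 0).comp h0).const_add ((starRingEnd ℂ) w)
    simpa using this
  have t4 := tendsto_nhds_unique t2 (t3.mono_left (by
    rw [← Nat.cofinite_eq_atTop]; exact Filter.hyperfilter_le_cofinite))
  rw [← t4, ← inner_conj_symm]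
  congr 1
  exact InnerProductSpace.toDual_symm_apply

lemma sum_memLp (s : Finset ℕ) (c l : ℕ → ℂ) (hl : ∀ i, 0 < (l i).re) :
    MemLp (fun t : ℝ => ∑ i ∈ s, c i * ((t : ℂ) * I + l i)⁻¹) 2 volume :=
  memLp_finsetSum _ (fun i _ => (kernel_memLp _ (hl i)).const_mul _)

lemma sum_toLp (s : Finset ℕ) (c l : ℕ → ℂ) (hl : ∀ i, 0 < (l i).re) :
    (sum_memLp s c l hl).toLp _ = ∑ i ∈ s, c i • Kv (l i) (hl i) := by
  induction s using Finset.induction_on with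
  | empty =>
    simp only [Finset.sum_empty]
    exact MemLp.toLp_zero _
  | insert a s ha ih =>
    rw [Finset.sum_insert ha, ← ih, Kv, ← MemLp.toLp_const_smul, ← MemLp.toLp_add]
    apply MemLp.toLp_congr
    filter_upwards with t
    simp [Finset.sum_insert ha]

lemma sum_H2 (s : Finset ℕ) (c l : ℕ → ℂ) (hl : ∀ i, 0 < (l i).re) (x : ℝ) (hx : 0 < x) :
    ∫⁻ y : ℝ, ‖∑ i ∈ s, c i * ((x + (y : ℂ) * I) + l i)⁻¹‖ₑ ^ 2 ≤
      ENNReal.ofReal (‖∑ i ∈ s, c i • Kv (l i) (hl i)‖ ^ 2) := by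
  rw [← sum_toLp, Lp_norm_sq]
  have hx' : ∀ i, 0 < (l i + x).re := by intro i; simp; linarith [hl i]
  have m1 := sum_memLp s c (fun i => l i + x) hx'
  have m0 := sum_memLp s c l hl
  have h := norm_sum_mono s c l hl x hx
  have e : ∀ (t : ℝ) i, ((x + (t : ℂ) * I) + l i) = (t : ℂ) * I + (l i + x) := by intros; ring
  simp_rw [e] at h ⊢
  have conv : ∀ f : ℝ → ℂ, MemLp f 2 volume → ∫⁻ t, ‖f t‖ₑ ^ 2 = ENNReal.ofReal (∫ t, ‖f t‖ ^ 2) := by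
    intro f hf
    rw [ofReal_integral_eq_lintegral_ofReal ((memLp_two_iff_integrable_sq_norm hf.1).1 hf)
      (by filter_upwards with t; positivity)]
    congr 1; ext t
    rw [ENNReal.ofReal_pow (norm_nonneg _), ofReal_norm]
  rw [conv _ m1, conv _ m0]
  exact ENNReal.ofReal_le_ofReal h

lemma kernels_dense (l : ℕ → ℂ) (hl : ∀ n, 0 < (l n).re) (c : ℂ)
    (hc : 0 < c.re) (hlc : ∀ n, l n ≠ c) (hlim : Filter.Tendsto l Filter.atTop (nhds c))
    (g : ℂ → ℂ) (hg : MemH2 g) (ε : ℝ) (hε : 0 < ε) :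
    ∃ h ∈ Submodule.span ℂ (Set.range fun n : ℕ => fun w : ℂ => (w + l n)⁻¹),
      H2normSq (g - h) < ENNReal.ofReal ε ^ 2 := by
  obtain ⟨v, hv⟩ := weak_limit g hg
  set V := Submodule.span ℂ (Set.range fun n : ℕ => Kv (l n) (hl n)) with hV
  obtain ⟨p, hp, u, hu, hpu⟩ := V.topologicalClosure.exists_add_mem_mem_orthogonal v
  have hu0 : ∀ w (hw : 0 < w.re), inner ℂ (Kv w hw) u = 0 := by
    apply inner_zero u l hl c hc hlc hlim
    intro n
    apply (Submodule.mem_orthogonal _ _).1 hu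
    exact V.le_topologicalClosure (Submodule.subset_span ⟨n, rfl⟩)
  have hp' : ∀ w (hw : 0 < w.re), inner ℂ (Kv w hw) p = 2 * Real.pi * g ((starRingEnd ℂ) w) := by
    intro w hw
    rw [← hv w hw, hpu, inner_add_right, hu0, add_zero]
  obtain ⟨q, hqV, hq⟩ := mem_closure_iff_seq_limit.1 (show p ∈ closure (V : Set _) from hp)
  have hcf : ∀ k, ∃ cf : ℕ →₀ ℂ, (cf.sum fun i a => a • Kv (l i) (hl i)) = q k := fun k =>
    Finsupp.mem_span_range_iff_exists_finsupp.1 (hqV k)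
  choose cf hcf using hcf
  set h : ℕ → ℂ → ℂ := fun k w => ∑ i ∈ (cf k).support, cf k i * (w + l i)⁻¹ with hh
  have hhm : ∀ k, h k ∈ Submodule.span ℂ (Set.range fun n : ℕ => fun w : ℂ => (w + l n)⁻¹) := by
    intro k
    rw [Finsupp.mem_span_range_iff_exists_finsupp]
    refine ⟨cf k, ?_⟩
    funext w
    simp [hh, Finsupp.sum, Finset.sum_apply]
  have hhin : ∀ k w (hw : 0 < w.re), inner ℂ (Kv w hw) (q k) = 2 * Real.pi * h k ((starRingEnd ℂ) w) := by
    intro k w hw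
    rw [← hcf k, Finsupp.sum, inner_sum, hh]
    simp only [inner_smul_right, inner_Kv_Kv, Finset.mul_sum]
    refine Finset.sum_congr rfl (fun i _ => by ring)
  have hpt : ∀ w : ℂ, 0 < w.re → Filter.Tendsto (fun k => h k w) Filter.atTop (nhds (g w)) := by
    intro w hw
    have hw' : 0 < ((starRingEnd ℂ) w).re := by simpa using hw
    have t := ((continuous_const (y := Kv _ hw')).inner (𝕜 := ℂ) continuous_id).tendsto p |>.comp hq
    have pi0 : (2 * Real.pi : ℂ) ≠ 0 := by
      have := Real.pi_ne_zero; exact_mod_cast mul_ne_zero two_ne_zero this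
    have t2 := t.const_mul ((2 * Real.pi : ℂ)⁻¹)
    simp only [Function.comp_def, id, hhin, hp', conj_conj, inv_mul_cancel_left₀ pi0] at t2
    exact t2
  have hdiff : ∀ k j (x : ℝ), 0 < x → ∫⁻ y : ℝ, ‖h k (x + (y : ℂ) * I) - h j (x + (y : ℂ) * I)‖ₑ ^ 2 ≤
      ENNReal.ofReal (‖q k - q j‖ ^ 2) := by
    intro k j x hx
    classical
    set s := (cf k).support ∪ (cf j).support with hs
    have e1 : ∀ w, h k w - h j w = ∑ i ∈ s, (cf k i - cf j i) * (w + l i)⁻¹ := by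
      intro w
      simp_rw [sub_mul, Finset.sum_sub_distrib, hh]
      congr 1
      · apply Finset.sum_subset Finset.subset_union_left
        intro i _ hi
        rw [Finsupp.notMem_support_iff.1 hi, zero_mul]
      · apply Finset.sum_subset Finset.subset_union_right
        intro i _ hi
        rw [Finsupp.notMem_support_iff.1 hi, zero_mul]
    have e2 : q k - q j = ∑ i ∈ s, (cf k i - cf j i) • Kv (l i) (hl i) := by
      simp_rw [sub_smul, Finset.sum_sub_distrib, ← hcf, Finsupp.sum]
      congr 1
      · apply Finset.sum_subset Finset.subset_union_left
        intro i _ hi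
        rw [Finsupp.notMem_support_iff.1 hi, zero_smul]
      · apply Finset.sum_subset Finset.subset_union_right
        intro i _ hi
        rw [Finsupp.notMem_support_iff.1 hi, zero_smul]
    simp_rw [e1, e2]
    exact sum_H2 s (fun i => cf k i - cf j i) l hl x hx
  obtain ⟨N, hN⟩ := Metric.cauchySeq_iff'.1 hq.cauchySeq (ε / 2) (by positivity)
  refine ⟨h N, hhm N, ?_⟩
  have hcont : ∀ k (x : ℝ), 0 < x → Continuous (fun y : ℝ => h k (x + (y : ℂ) * I)) := by
    intro k x hx
    simp only [hh]
    refine continuous_finsetSum _ (fun i _ => continuous_const.mul (Continuous.inv₀ (by fun_prop) ?_))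
    intro y hy
    have := congrArg Complex.re hy
    simp at this
    linarith [hl i]
  have hfinal : H2normSq (g - h N) ≤ ENNReal.ofReal ((ε / 2) ^ 2) := by
    apply iSup₂_le
    intro x hx
    have hx : 0 < x := hx
    calc ∫⁻ y : ℝ, ‖(g - h N) (x + (y : ℂ) * I)‖ₑ ^ 2
        = ∫⁻ y : ℝ, Filter.liminf (fun k => ‖h k (x + (y : ℂ) * I) - h N (x + (y : ℂ) * I)‖ₑ ^ 2) Filter.atTop := by
          congr 1; ext y
          symm
          apply Filter.Tendsto.liminf_eq
          have t := (hpt (x + (y : ℂ) * I) (by simpa using hx)).sub_const (h N (x + (y : ℂ) * I))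
          exact ((ENNReal.continuous_pow 2).tendsto _).comp t.enorm
      _ ≤ Filter.liminf (fun k => ∫⁻ y : ℝ, ‖h k (x + (y : ℂ) * I) - h N (x + (y : ℂ) * I)‖ₑ ^ 2) Filter.atTop := by
          apply lintegral_liminf_le
          intro k
          exact (((hcont k x hx).sub (hcont N x hx)).enorm.measurable).pow_const 2
      _ ≤ Filter.liminf (fun k : ℕ => ENNReal.ofReal ((ε / 2) ^ 2)) Filter.atTop := by
          refine Filter.liminf_le_liminf ?_
          filter_upwards [Filter.eventually_ge_atTop N] with k hk
          refine (hdiff k N x hx).trans (ENNReal.ofReal_le_ofReal ?_)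
          have := (hN k hk).le
          rw [dist_eq_norm] at this
          gcongr
      _ = _ := Filter.liminf_const _
  refine hfinal.trans_lt ?_
  rw [← ENNReal.ofReal_pow hε.le]
  apply (ENNReal.ofReal_lt_ofReal_iff (by positivity)).2
  nlinarith

/-- Type II hyperbolic non-automorphisms induce cyclic composition operators. -/
theorem typeII_cyclic (a : ℝ) (ha : 1 < a) (b : ℂ) (hb : 0 < b.re)
    (φ : ℂ → ℂ) (hφ : ∀ w, φ w = (a : ℂ) * w + b) :
    ∃ f : ℂ → ℂ, MemH2 f ∧
      ∀ g : ℂ → ℂ, MemH2 g → ∀ ε : ℝ, 0 < ε →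
        ∃ h ∈ Submodule.span ℂ (Set.range fun n : ℕ => f ∘ φ^[n]),
          H2normSq (g - h) < ENNReal.ofReal ε ^ 2 := by
  have ha1 : (0 : ℝ) < a - 1 := by linarith
  have ha0 : (0 : ℝ) < a := by linarith
  have haC : (a : ℂ) ≠ 0 := by exact_mod_cast ha0.ne'
  have ha1C : (a : ℂ) - 1 ≠ 0 := by exact_mod_cast ha1.ne'
  set c : ℂ := b / ((a : ℂ) - 1) with hcdef
  have hc : 0 < c.re := by
    have : c = b / ((a - 1 : ℝ) : ℂ) := by rw [hcdef]; push_cast; rfl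
    rw [this, Complex.div_ofReal_re]
    positivity
  have hbc : b = (a - 1) * c := by rw [hcdef]; field_simp
  set l : ℕ → ℂ := fun n => c + (((a⁻¹) ^ n : ℝ) : ℂ) with hldef
  have hl : ∀ n, 0 < (l n).re := by
    intro n
    simp only [hldef, add_re, ofReal_re]
    positivity
  have hlc : ∀ n, l n ≠ c := by
    intro n h
    have h2 : (((a⁻¹) ^ n : ℝ) : ℂ) = 0 := by
      have : c + (((a⁻¹) ^ n : ℝ) : ℂ) = c + 0 := by rw [add_zero]; exact h
      exact add_left_cancel this
    have h3 : (a⁻¹) ^ n = 0 := by exact_mod_cast h2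
    have : 0 < (a⁻¹) ^ n := by positivity
    linarith
  have hlim : Filter.Tendsto l Filter.atTop (nhds c) := by
    have h0 : Filter.Tendsto (fun n : ℕ => (a⁻¹) ^ n) Filter.atTop (nhds 0) :=
      tendsto_pow_atTop_nhds_zero_of_lt_one (by positivity) (inv_lt_one_of_one_lt₀ ha)
    have := ((continuous_ofReal.tendsto 0).comp h0).const_add c
    rw [ofReal_zero, add_zero] at this
    exact this
  have hiter : ∀ (n : ℕ) (w : ℂ), φ^[n] w = (a : ℂ) ^ n * (w + c) - c := by
    intro n
    induction n with
    | zero => intro w; simp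
    | succ n ih =>
      intro w
      rw [Function.iterate_succ_apply', ih, hφ, hbc]
      ring
  refine ⟨fun w => (w + (c + 1))⁻¹, ⟨?_, ?_⟩, ?_⟩
  · apply DifferentiableOn.inv (by fun_prop)
    intro w (hw : 0 < w.re) h
    have := congrArg Complex.re h
    simp at this
    linarith
  · have hc1 : 0 < (c + 1).re := by simp; linarith
    refine lt_of_le_of_lt (b := ENNReal.ofReal (‖∑ i ∈ {0}, (1 : ℂ) • Kv (c + 1) hc1‖ ^ 2)) ?_ ENNReal.ofReal_lt_top
    apply iSup₂_le
    intro x hx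
    have := sum_H2 {0} (fun _ => 1) (fun _ => c + 1) (fun _ => hc1) x hx
    simp only [Finset.sum_singleton, one_mul] at this ⊢
    exact this
  · intro g hg ε hε
    obtain ⟨h, hh, hlt⟩ := kernels_dense l hl c hc hlc hlim g hg ε hε
    refine ⟨h, ?_, hlt⟩
    refine Submodule.span_le.2 ?_ hh
    rintro _ ⟨n, rfl⟩
    have : (fun w : ℂ => (w + l n)⁻¹) = ((a : ℂ) ^ n) • ((fun w => (w + (c + 1))⁻¹) ∘ φ^[n]) := by
      funext w
      simp only [Pi.smul_apply, Function.comp_apply, smul_eq_mul, hiter]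
      have han : (a : ℂ) ^ n ≠ 0 := pow_ne_zero _ haC
      have : (a : ℂ) ^ n * (w + c) - c + (c + 1) = (a : ℂ) ^ n * (w + l n) := by
        simp only [hldef]
        push_cast
        rw [inv_pow]
        field_simp
        ring
      rw [this, mul_inv, mul_inv_cancel_left₀ han]
    show (fun w : ℂ => (w + l n)⁻¹) ∈ _
    rw [this]
    exact Submodule.smul_mem _ _ (Submodule.subset_span ⟨n, rfl⟩)
end

section
/- (Cyclicity of parabolic non-automorphisms.) Let b ∈ ℂ with Re(b) > 0 and let φ(w) = w + b. Then the composition operator C_φ is cyclic on H²(ℂ₊) with cyclic vector k₁(w) = 1/(w+1): for every g ∈ H²(ℂ₊) and every ε > 0 there is a finite linear combination h of the functions k₁ ∘ φ^[n] = (w ↦ 1/(w + 1 + n·b)), n ∈ ℕ, with ‖g − h‖ < ε. -/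
open Complex MeasureTheory

lemma kint (z : ℂ) (hz : z.re ≠ 0) :
    Integrable (fun s : ℝ => ‖(z + s * I)⁻¹‖ ^ 2) ∧
    ∫ s : ℝ, ‖(z + s * I)⁻¹‖ ^ 2 = Real.pi / |z.re| := by
  have hu : |z.re| ≠ 0 := by simpa using hz
  have key : ∀ s : ℝ, ‖(z + s * I)⁻¹‖ ^ 2
      = (|z.re| ^ 2)⁻¹ * (1 + ((s + z.im) / |z.re|) ^ 2)⁻¹ := by
    intro s
    rw [norm_inv, inv_pow, Complex.sq_norm, Complex.normSq_apply, ← mul_inv]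
    congr 1
    simp only [add_re, add_im, mul_re, mul_im, ofReal_re, ofReal_im, I_re, I_im]
    field_simp
    rw [sq_abs]; ring
  have hi := integrable_inv_one_add_sq.comp_div hu
  have hi2 := hi.comp_add_right z.im
  simp_rw [key]
  refine ⟨hi2.const_mul _, ?_⟩
  rw [integral_const_mul]
  rw [integral_add_right_eq_self (fun s : ℝ => (1 + (s / |z.re|) ^ 2)⁻¹) z.im]
  rw [Measure.integral_comp_div (fun s : ℝ => (1 + s ^ 2)⁻¹), integral_univ_inv_one_add_sq]
  rw [abs_abs, smul_eq_mul]; field_simp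

lemma klint (z : ℂ) (hz : z.re ≠ 0) :
    ∫⁻ s : ℝ, ‖(z + s * I)⁻¹‖ₑ ^ 2 = ENNReal.ofReal (Real.pi / |z.re|) := by
  obtain ⟨h1, h2⟩ := kint z hz
  rw [← h2, ofReal_integral_eq_lintegral_ofReal h1 (Filter.Eventually.of_forall fun _ => by positivity)]
  refine lintegral_congr fun s => ?_
  rw [ENNReal.ofReal_pow (norm_nonneg _), ofReal_norm]

lemma csh {f g : ℝ → ℂ} (hf : AEMeasurable f) (hg : AEMeasurable g) :
    (∫⁻ y : ℝ, ‖f y‖ₑ * ‖g y‖ₑ) ^ 2 ≤ (∫⁻ y : ℝ, ‖f y‖ₑ ^ 2) * ∫⁻ y : ℝ, ‖g y‖ₑ ^ 2 := by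
  have := ENNReal.lintegral_mul_le_Lp_mul_Lq (μ := volume) Real.HolderConjugate.two_two
    hf.enorm hg.enorm
  simp only [ENNReal.rpow_two, Pi.mul_apply] at this
  calc _ ≤ _ := pow_le_pow_left' this 2
    _ = _ := by
      rw [mul_pow, ← ENNReal.rpow_two, ← ENNReal.rpow_two, ← ENNReal.rpow_mul, ← ENNReal.rpow_mul]
      norm_num

lemma line_cont {q : ℂ → ℂ} {δ x : ℝ} (hx : δ ≤ x)
    (hq : ∀ z : ℂ, δ ≤ z.re → DifferentiableAt ℂ q z) :
    Continuous (fun y : ℝ => q (x + y * I)) := by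
  rw [continuous_iff_continuousAt]
  intro y
  have h1 : ContinuousAt q (x + y * I) := (hq _ (by simpa using hx)).continuousAt
  exact ContinuousAt.comp (f := fun y : ℝ => (x + y * I : ℂ)) h1 (by fun_prop)

lemma line_bound {q : ℂ → ℂ} {δ x : ℝ} {a : ℂ} (hx : δ ≤ x) (hxa : a.re ≠ x)
    (hq : ∀ z : ℂ, δ ≤ z.re → DifferentiableAt ℂ q z) :
    (∫⁻ y : ℝ, ‖q (x + y * I)‖ₑ) ^ 2 ≤
      (∫⁻ y : ℝ, ‖(x + y * I - a) * q (x + y * I)‖ₑ ^ 2) *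
        ENNReal.ofReal (Real.pi / |x - a.re|) := by
  have hc := line_cont hx hq
  have hne : ∀ y : ℝ, (x + y * I - a : ℂ) ≠ 0 := by
    intro y h
    apply hxa
    have := congrArg Complex.re h
    simp at this; linarith
  have hk := klint (x - a) (by simp; exact sub_ne_zero.mpr hxa.symm)
  have e : ∀ y : ℝ, (x - a + y * I : ℂ) = x + y * I - a := fun y => by ring
  simp only [e, sub_re, ofReal_re] at hk
  rw [← hk]
  have hci : Continuous (fun y : ℝ => (x + y * I - a : ℂ)⁻¹) :=
    Continuous.inv₀ (by fun_prop) hne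
  refine le_trans (le_of_eq ?_) (csh (f := fun y : ℝ => (x + y * I - a : ℂ) * q (x + y * I))
    (g := fun y : ℝ => (x + y * I - a : ℂ)⁻¹) ?_ hci.aemeasurable)
  · congr 1
    refine lintegral_congr fun y => ?_
    rw [← enorm_mul]
    congr 1
    field_simp [hne y]
  · exact (Continuous.mul (by fun_prop) hc).aemeasurable

lemma horiz {q : ℂ → ℂ} {δ X : ℝ} {a : ℂ}
    (hq : ∀ z : ℂ, δ ≤ z.re → DifferentiableAt ℂ q z) {C : ENNReal} (hC : C ≠ ⊤)
    (hb : ∀ x : ℝ, δ ≤ x → ∫⁻ y : ℝ, ‖(x + y * I - a) * q (x + y * I)‖ₑ ^ 2 ≤ C) (N : ℝ) :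
    ∃ T, N < T ∧ ∫⁻ x in Set.Icc δ X, ‖(x + T * I - a) * q (x + T * I)‖ₑ ^ 2 ≤ 1 ∧
      ∫⁻ x in Set.Icc δ X, ‖(x + (-T : ℝ) * I - a) * q (x + (-T : ℝ) * I)‖ₑ ^ 2 ≤ 1 := by
  classical
  set f : ℂ → ℂ := Set.indicator {z : ℂ | δ ≤ z.re} (fun z => (z - a) * q z) with hf
  have hS : MeasurableSet {z : ℂ | δ ≤ z.re} := measurableSet_le measurable_const measurable_re
  have hfm : Measurable f := by
    have : ContinuousOn (fun z => (z - a) * q z) {z : ℂ | δ ≤ z.re} := fun z hz =>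
      (ContinuousAt.mul (by fun_prop) (hq z hz).continuousAt).continuousWithinAt
    rw [hf, ← Set.piecewise_eq_indicator]
    exact this.measurable_piecewise continuousOn_const hS
  have hfe : ∀ x y : ℝ, δ ≤ x → f (x + y * I) = (x + y * I - a) * q (x + y * I) := by
    intro x y hx
    rw [hf, Set.indicator_of_mem]
    simpa using hx
  set m : ℝ → ENNReal := fun T => ∫⁻ x in Set.Icc δ X, ‖f (x + T * I)‖ₑ ^ 2 with hm
  have hmm : ∀ T : ℝ, ∫⁻ x in Set.Icc δ X, ‖(x + T * I - a) * q (x + T * I)‖ₑ ^ 2 = m T := by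
    intro T
    refine setLIntegral_congr_fun measurableSet_Icc fun x hx => ?_
    simp only [hfe x T hx.1]
  have hjm : Measurable (fun p : ℝ × ℝ => ‖f (p.2 + p.1 * I)‖ₑ ^ 2) := by
    refine Measurable.pow_const (Measurable.enorm (hfm.comp ?_)) _
    fun_prop
  have hmeas : Measurable m := Measurable.lintegral_prod_right' hjm
  have hint : ∫⁻ T, m T ≤ C * volume (Set.Icc δ X) := by
    rw [hm, lintegral_lintegral_swap hjm.aemeasurable]
    calc _ ≤ ∫⁻ x in Set.Icc δ X, C := by
          refine setLIntegral_mono measurable_const fun x hx => ?_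
          simp only [hfe x _ hx.1]
          exact hb x hx.1
      _ = _ := by simp
  have hfin : ∫⁻ T, m T < ⊤ := hint.trans_lt (ENNReal.mul_lt_top hC.lt_top (by simp))
  have hneg : ∫⁻ T, m (-T) = ∫⁻ T, m T := lintegral_neg_eq_self m
  by_contra hcon
  push Not at hcon
  simp only [hmm] at hcon
  have : ∫⁻ T in Set.Ioi N, (1 : ENNReal) ≤ ∫⁻ T, (m T + m (-T)) := by
    refine le_trans ?_ (setLIntegral_le_lintegral (Set.Ioi N) _)
    refine setLIntegral_mono (hmeas.add (hmeas.comp measurable_neg)) fun T hT => ?_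
    by_cases h : m T ≤ 1
    · exact (hcon T hT h).le.trans le_add_self
    · exact (not_le.mp h).le.trans le_self_add
  rw [lintegral_add_left hmeas, hneg] at this
  simp at this
  exact hfin.ne this

lemma seg_bound {q : ℂ → ℂ} {δ X T R : ℝ} {a : ℂ} (hX : δ ≤ X)
    (hq : ∀ z : ℂ, δ ≤ z.re → DifferentiableAt ℂ q z) (hR : 0 < R) (hT : R ≤ |T - a.im|)
    (h : ∫⁻ x in Set.Icc δ X, ‖(x + T * I - a) * q (x + T * I)‖ₑ ^ 2 ≤ 1) :
    ‖∫ x in δ..X, q (x + T * I)‖ ≤ (X - δ + 1) / R := by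
  have hc : ContinuousOn (fun x : ℝ => (x + T * I - a) * q (x + T * I)) (Set.Icc δ X) := by
    intro x hx
    refine ContinuousAt.continuousWithinAt ?_
    have h1 : ContinuousAt q (x + T * I) := (hq _ (by simpa using hx.1)).continuousAt
    have h2 := ContinuousAt.comp (f := fun x : ℝ => (x + T * I : ℂ)) h1 (by fun_prop)
    exact ContinuousAt.mul (by fun_prop) h2
  have hc2 : IntegrableOn (fun x : ℝ => ‖(x + T * I - a) * q (x + T * I)‖ ^ 2) (Set.Icc δ X) :=
    (hc.norm.pow 2).integrableOn_Icc
  have hle : ∫ x in Set.Icc δ X, ‖(x + T * I - a) * q (x + T * I)‖ ^ 2 ≤ 1 := by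
    rw [integral_eq_lintegral_of_nonneg_ae (Filter.Eventually.of_forall fun _ => by positivity)
      hc2.aestronglyMeasurable]
    refine ENNReal.toReal_le_of_le_ofReal zero_le_one ?_
    refine le_trans (le_of_eq ?_) (h.trans (by simp))
    refine lintegral_congr fun s => ?_
    rw [ENNReal.ofReal_pow (norm_nonneg _), ofReal_norm]
  have hb : ∀ x ∈ Set.Ioc δ X, ‖q (x + T * I)‖ ≤
      (1 + ‖(x + T * I - a) * q (x + T * I)‖ ^ 2) / R := by
    intro x hx
    rw [le_div_iff₀ hR]
    have h1 : R ≤ ‖(x + T * I - a : ℂ)‖ := by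
      refine hT.trans (le_trans (le_of_eq ?_) (abs_im_le_norm _))
      simp
    rw [norm_mul]
    set A := ‖(x + T * I - a : ℂ)‖
    set B := ‖q (x + T * I)‖
    have hB : 0 ≤ B := norm_nonneg _
    nlinarith [mul_le_mul_of_nonneg_left h1 hB, sq_nonneg (A * B - 1)]
  calc ‖∫ x in δ..X, q (x + T * I)‖
      ≤ ∫ x in δ..X, (1 + ‖(x + T * I - a) * q (x + T * I)‖ ^ 2) / R := by
        refine intervalIntegral.norm_integral_le_of_norm_le hX
          (Filter.Eventually.of_forall hb) ?_
        rw [intervalIntegrable_iff_integrableOn_Icc_of_le hX]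
        exact ((integrable_const _).add hc2).div_const _
    _ ≤ _ := by
        rw [intervalIntegral.integral_of_le hX, ← integral_Icc_eq_integral_Ioc, integral_div,
          integral_add (integrable_const _) hc2]
        gcongr
        simp [hX]

lemma cauchy_zero {q : ℂ → ℂ} {δ : ℝ} {a : ℂ} (ha : a.re ≠ δ)
    (hq : ∀ z : ℂ, δ ≤ z.re → DifferentiableAt ℂ q z) {C : ENNReal} (hC : C ≠ ⊤)
    (hb : ∀ x : ℝ, δ ≤ x → ∫⁻ y : ℝ, ‖(x + y * I - a) * q (x + y * I)‖ₑ ^ 2 ≤ C) :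
    Integrable (fun y : ℝ => q (δ + y * I)) ∧ ∫ y : ℝ, q (δ + y * I) = 0 := by
  have hsq : ∀ x : ℝ, δ ≤ x → a.re ≠ x → (∫⁻ y : ℝ, ‖q (x + y * I)‖ₑ) ^ 2 ≤
      C * ENNReal.ofReal (Real.pi / |x - a.re|) := fun x hx hxa =>
    (line_bound hx hxa hq).trans (by gcongr; exact hb x hx)
  have hint : ∀ x : ℝ, δ ≤ x → a.re ≠ x → Integrable (fun y : ℝ => q (x + y * I)) := by
    intro x hx hxa
    refine ⟨(line_cont hx hq).aestronglyMeasurable, ?_⟩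
    have h1 := (hsq x hx hxa).trans_lt (ENNReal.mul_lt_top hC.lt_top ENNReal.ofReal_lt_top)
    rw [HasFiniteIntegral]
    by_contra h
    rw [not_lt, top_le_iff] at h
    rw [h] at h1
    simp at h1
  refine ⟨hint δ le_rfl ha, ?_⟩
  have hconst : ∀ X : ℝ, δ ≤ X → a.re ≠ X →
      ∫ y : ℝ, q (X + y * I) = ∫ y : ℝ, q (δ + y * I) := by
    intro X hX hXa
    have t1 := intervalIntegral_tendsto_integral (hint X hX hXa)
      Filter.tendsto_neg_atTop_atBot Filter.tendsto_id
    have t2 := intervalIntegral_tendsto_integral (hint δ le_rfl ha)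
      Filter.tendsto_neg_atTop_atBot Filter.tendsto_id
    have t := (t1.sub t2).norm
    rw [← sub_eq_zero, ← norm_eq_zero]
    by_contra hne
    have hpos : 0 < ‖(∫ y : ℝ, q (X + y * I)) - ∫ y : ℝ, q (δ + y * I)‖ :=
      lt_of_le_of_ne (norm_nonneg _) (Ne.symm hne)
    set L := ‖(∫ y : ℝ, q (X + y * I)) - ∫ y : ℝ, q (δ + y * I)‖ with hL
    have hev := t.eventually (lt_mem_nhds (half_lt_self hpos))
    obtain ⟨N, hN⟩ := Filter.eventually_atTop.mp hev
    set R : ℝ := 4 * (X - δ + 1) / L + 1 with hR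
    have hRpos : 0 < R := by
      have : 0 ≤ X - δ := by linarith
      positivity
    obtain ⟨T, hT, h1, h2⟩ := horiz (X := X) hq hC hb (max N (R + |a.im|))
    have hT1 : N ≤ T := (le_max_left _ _).trans hT.le
    have hT2 : R + |a.im| ≤ T := (le_max_right _ _).trans hT.le
    have b1 := seg_bound hX hq hRpos (T := T)
      (by have := le_abs_self (T - a.im); have := le_abs_self a.im; linarith) h1
    have b2 := seg_bound hX hq hRpos (T := -T)
      (by have := neg_le_abs (-T - a.im); have := neg_abs_le a.im; linarith) h2
    have hrect := Complex.integral_boundary_rect_eq_zero_of_differentiableOn q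
      (δ + (-T : ℝ) * I) (X + (T : ℝ) * I) (by
        intro z hz
        refine (hq z ?_).differentiableWithinAt
        have := hz.1
        simp [Set.uIcc_of_le hX] at this
        exact this.1)
    simp only [add_re, add_im, ofReal_re, ofReal_im, mul_re, mul_im, I_re, I_im] at hrect
    simp only [mul_zero, mul_one, sub_zero, add_zero, zero_add, smul_eq_mul] at hrect
    have hlt := hN T hT1
    simp only [id] at hlt
    have heq : (∫ y in (-T)..T, q (X + y * I)) - ∫ y in (-T)..T, q (δ + y * I)
       = I * ((∫ x in δ..X, q (x + (-T : ℝ) * I)) - ∫ x in δ..X, q (x + T * I)) := by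
      linear_combination (-I) * hrect + ((∫ y in (-T)..T, q (X + y * I)) - ∫ y in (-T)..T, q (δ + y * I)) * I_mul_I
    rw [heq, norm_mul, norm_I, one_mul] at hlt
    have h3 := (norm_sub_le _ _).trans (add_le_add b2 b1)
    have h4 : (X - δ + 1) / R ≤ L / 4 := by
      rw [div_le_iff₀ hRpos, hR]
      field_simp
      nlinarith
    linarith
  -- limit
  have hle : ∀ X : ℝ, δ ≤ X → a.re < X → ‖∫ y : ℝ, q (δ + y * I)‖ₑ ^ 2 ≤
      C * ENNReal.ofReal (Real.pi / |X - a.re|) := by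
    intro X hX hXa
    rw [← hconst X hX hXa.ne]
    refine le_trans ?_ (hsq X hX hXa.ne)
    gcongr
    exact enorm_integral_le_lintegral_enorm _
  have hlim : Filter.Tendsto (fun X : ℝ => C * ENNReal.ofReal (Real.pi / |X - a.re|)) Filter.atTop
      (nhds (C * ENNReal.ofReal 0)) := by
    refine ENNReal.Tendsto.const_mul ?_ (Or.inr hC)
    refine ENNReal.tendsto_ofReal ?_
    refine Filter.Tendsto.div_atTop tendsto_const_nhds ?_
    refine Filter.tendsto_abs_atTop_atTop.comp ?_
    exact Filter.tendsto_atTop_add_const_right _ _ Filter.tendsto_id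
  have h0 := ge_of_tendsto hlim (Filter.eventually_atTop.mpr ⟨max δ (a.re + 1), fun X hX =>
    hle X ((le_max_left _ _).trans hX) (by have := (le_max_right δ (a.re+1)).trans hX; linarith)⟩)
  simpa using h0

lemma H2_line {g : ℂ → ℂ} {x : ℝ} (hx : 0 < x) :
    ∫⁻ y : ℝ, ‖g (x + y * I)‖ₑ ^ 2 ≤ H2normSq g :=
  le_iSup₂ (f := fun (x : ℝ) (_ : x ∈ Set.Ioi (0 : ℝ)) =>
    ∫⁻ y : ℝ, (‖g ((x : ℂ) + (y : ℂ) * Complex.I)‖₊ : ENNReal) ^ 2) x hx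

lemma MemH2.diffAt {g : ℂ → ℂ} (hg : MemH2 g) {z : ℂ} (hz : 0 < z.re) :
    DifferentiableAt ℂ g z :=
  hg.1.differentiableAt ((isOpen_lt continuous_const continuous_re).mem_nhds hz)

lemma ne_of_re {z : ℂ} (hz : z.re ≠ 0) (s : ℝ) : z + s * I ≠ 0 := by
  intro h
  apply hz
  simpa using congrArg Complex.re h

lemma cauchy_out {g : ℂ → ℂ} (hg : MemH2 g) {δ : ℝ} (hδ : 0 < δ) {z : ℂ} (hz : 0 < z.re) :
    ∫ s : ℝ, (z + s * I)⁻¹ * g (δ + s * I) = 0 := by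
  have hne : ∀ ζ : ℂ, δ ≤ ζ.re → ζ - (δ - z) ≠ 0 := by
    intro ζ hζ h
    have := congrArg Complex.re h
    simp at this; linarith
  have := (cauchy_zero (q := fun ζ => (ζ - (δ - z))⁻¹ * g ζ) (δ := δ) (a := δ - z)
    (by simp; exact hz.ne') (fun ζ hζ => ?_) hg.2.ne (fun x hx => ?_)).2
  · rw [← this]
    congr 1
    ext s
    congr 2
    ring
  · have h1 := hg.diffAt (hδ.trans_le hζ)
    exact DifferentiableAt.mul (DifferentiableAt.inv (by fun_prop) (hne ζ hζ)) h1
  · refine le_trans (le_of_eq ?_) (H2_line (hδ.trans_le hx))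
    refine lintegral_congr fun y => ?_
    rw [mul_inv_cancel_left₀]
    exact hne _ (by simpa using hx)

lemma cauchy_in {g : ℂ → ℂ} (hg : MemH2 g) {δ : ℝ} (hδ : 0 < δ) {w : ℂ} (hw : 0 < w.re) :
    ∫ s : ℝ, (w - s * I)⁻¹ * g (δ + s * I) = 2 * Real.pi * g (w + δ) := by
  set a : ℂ := w + δ with ha
  set c : ℂ := δ - (starRingEnd ℂ) w with hc
  have hne : ∀ ζ : ℂ, δ ≤ ζ.re → ζ - c ≠ 0 := by
    intro ζ hζ h
    have := congrArg Complex.re h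
    simp [hc] at this; linarith
  have hare : δ < a.re := by simp [ha, hw]
  set f : ℂ → ℂ := fun ζ => g ζ - g a * (2 * w.re) * (ζ - c)⁻¹ with hf
  have hac : a - c = 2 * w.re := by
    rw [ha, hc]
    apply Complex.ext <;> simp
    ring
  have hw2 : (2 * w.re : ℂ) ≠ 0 := by
    norm_cast; positivity
  have hfa : f a = 0 := by
    simp only [hf, hac]
    rw [mul_inv_cancel_right₀ hw2, sub_self]
  set U : Set ℂ := {ζ : ℂ | 0 < ζ.re ∧ c.re < ζ.re} with hU
  have hUo : IsOpen U := (isOpen_lt continuous_const continuous_re).inter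
    (isOpen_lt continuous_const continuous_re)
  have hfU : DifferentiableOn ℂ f U := by
    intro ζ hζ
    have hcne : ζ - c ≠ 0 := by
      intro h
      have := congrArg Complex.re h
      have := hζ.2
      simp at *; linarith
    have h1 := hg.diffAt hζ.1
    refine DifferentiableAt.differentiableWithinAt ?_
    exact h1.sub (DifferentiableAt.mul (by fun_prop) (DifferentiableAt.inv (by fun_prop) hcne))
  have hUm : ∀ ζ : ℂ, δ ≤ ζ.re → ζ ∈ U := by
    intro ζ hζ
    refine ⟨by linarith, ?_⟩
    simp [hc]; linarith
  have hq : ∀ ζ : ℂ, δ ≤ ζ.re → DifferentiableAt ℂ (dslope f a) ζ := fun ζ hζ =>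
    ((Complex.differentiableOn_dslope (hUo.mem_nhds (hUm a hare.le))).mpr hfU).differentiableAt
      (hUo.mem_nhds (hUm ζ hζ))
  have hmul : ∀ ζ, (ζ - a) * dslope f a ζ = f ζ := by
    intro ζ
    have := sub_smul_dslope f a ζ
    rwa [smul_eq_mul, hfa, sub_zero] at this
  set D : ENNReal := ‖g a * (2 * w.re)‖ₑ ^ 2 * ENNReal.ofReal (Real.pi / w.re) with hD
  have hz := cauchy_zero (q := dslope f a) (δ := δ) (a := a) hare.ne' hq
    (C := 2 * (H2normSq g + D)) ?_ (fun x hx => ?_)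
  · have h2 := hz.2
    have hq2 : ∀ s : ℝ, dslope f a (δ + s * I) = -((w - s * I)⁻¹ * g (δ + s * I))
        + g a * (2 * w.re) * ((‖((starRingEnd ℂ) w + s * I)⁻¹‖ ^ 2 : ℝ) : ℂ) := by
      intro s
      have hA : ((δ + s * I : ℂ) - a) = -(w - s * I) := by rw [ha]; ring
      have hB : ((δ + s * I : ℂ) - c) = (starRingEnd ℂ) w + s * I := by rw [hc]; ring
      have hcj : (starRingEnd ℂ) ((starRingEnd ℂ) w + s * I) = w - s * I := by simp; ring
      have hn1 : (w - s * I) ≠ 0 := by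
        rw [← hcj]; simp only [ne_eq, map_eq_zero]
        exact ne_of_re (by simpa using hw.ne') s
      have hn2 : (starRingEnd ℂ) w + s * I ≠ 0 := ne_of_re (by simpa using hw.ne') s
      have h := hmul (δ + s * I)
      rw [hA] at h
      simp only [hf, hB] at h
      have hns : ((‖((starRingEnd ℂ) w + s * I)⁻¹‖ ^ 2 : ℝ) : ℂ) =
          ((starRingEnd ℂ) w + s * I)⁻¹ * (w - s * I)⁻¹ := by
        push_cast
        rw [← Complex.mul_conj', map_inv₀, hcj]
      rw [hns]
      have : dslope f a (δ + s * I) = -(w - s * I)⁻¹ * (-(w - s * I) * dslope f a (δ + s * I)) := by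
        field_simp
      rw [this, h]; ring
    obtain ⟨k1, k2⟩ := kint ((starRingEnd ℂ) w) (by simpa using hw.ne')
    have k1' : Integrable (fun s : ℝ => g a * (2 * w.re) *
        ((‖((starRingEnd ℂ) w + s * I)⁻¹‖ ^ 2 : ℝ) : ℂ)) := k1.ofReal.const_mul _
    have hi1 : Integrable (fun s : ℝ => (w - s * I)⁻¹ * g (δ + s * I)) := by
      have := (k1'.sub hz.1)
      refine this.congr (Filter.Eventually.of_forall fun s => ?_)
      simp only [Pi.sub_apply, hq2 s]
      ring
    simp_rw [hq2] at h2
    have hi1n : Integrable (fun s : ℝ => -((w - s * I)⁻¹ * g (δ + s * I))) := hi1.neg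
    rw [integral_add hi1n k1', integral_neg, integral_const_mul, integral_complex_ofReal, k2] at h2
    rw [neg_add_eq_zero] at h2
    rw [h2]
    simp only [conj_re, abs_of_pos hw]
    push_cast
    have : (w.re : ℂ) ≠ 0 := by exact_mod_cast hw.ne'
    field_simp
  · refine ENNReal.mul_ne_top (by simp) (ENNReal.add_ne_top.mpr ⟨hg.2.ne, ?_⟩)
    exact ENNReal.mul_ne_top (ENNReal.pow_ne_top enorm_ne_top) ENNReal.ofReal_ne_top
  · simp_rw [hmul]
    have hxre : c.re < x := (hUm x (by simpa using hx)).2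
    have hk := klint (x - c) (by simp; linarith)
    have e : ∀ y : ℝ, (x - c + y * I : ℂ) = x + y * I - c := fun y => by ring
    simp only [e] at hk
    have hgc : Continuous (fun y : ℝ => g (x + y * I)) :=
      line_cont (δ := δ) hx (fun z hz => hg.diffAt (hδ.trans_le hz))
    calc ∫⁻ y : ℝ, ‖f (x + y * I)‖ₑ ^ 2
        ≤ ∫⁻ y : ℝ, 2 * (‖g (x + y * I)‖ₑ ^ 2 +
            ‖g a * (2 * w.re)‖ₑ ^ 2 * ‖((x + y * I : ℂ) - c)⁻¹‖ₑ ^ 2) := by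
          refine lintegral_mono fun y => ?_
          rw [← mul_pow, ← enorm_mul]
          have h := enorm_sub_le (a := g (x + y * I)) (b := g a * (2 * w.re) * ((x + y * I : ℂ) - c)⁻¹)
          refine (pow_le_pow_left' h 2).trans ?_
          have := ENNReal.rpow_add_le_mul_rpow_add_rpow ‖g (x + y * I)‖ₑ
            ‖g a * (2 * w.re) * ((x + y * I : ℂ) - c)⁻¹‖ₑ (p := 2) (by norm_num)
          norm_num at this
          simpa using this
      _ = 2 * ((∫⁻ y : ℝ, ‖g (x + y * I)‖ₑ ^ 2) +
            ‖g a * (2 * w.re)‖ₑ ^ 2 * ∫⁻ y : ℝ, ‖((x + y * I : ℂ) - c)⁻¹‖ₑ ^ 2) := by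
          rw [lintegral_const_mul' _ _ (by simp), lintegral_add_left (hgc.measurable.enorm.pow_const 2),
            lintegral_const_mul' _ _ (ENNReal.pow_ne_top enorm_ne_top)]
      _ ≤ _ := by
          gcongr
          · exact H2_line (hδ.trans_le hx)
          · rw [hk, hD]
            gcongr
            refine le_trans ?_ (le_abs_self _)
            simp [hc]; linarith

/-- The space `L²(ℝ)`. -/
noncomputable abbrev L2R := Lp ℂ 2 (volume : Measure ℝ)

lemma E_memLp {z : ℂ} (hz : z.re ≠ 0) : MemLp (fun s : ℝ => (z + s * I)⁻¹) 2 := by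
  have hc : Continuous (fun s : ℝ => (z + s * I)⁻¹) :=
    Continuous.inv₀ (by fun_prop) (ne_of_re hz)
  rw [memLp_two_iff_integrable_sq_norm hc.aestronglyMeasurable]
  exact (kint z hz).1

open Classical in
/-- The kernel vector. -/
noncomputable def eL (z : ℂ) : L2R := if hz : z.re ≠ 0 then (E_memLp hz).toLp else 0

lemma eL_ae {z : ℂ} (hz : z.re ≠ 0) : eL z =ᵐ[volume] fun s : ℝ => (z + s * I)⁻¹ := by
  rw [eL, dif_pos hz]
  exact MemLp.coeFn_toLp _

lemma inner_eL {z : ℂ} (hz : z.re ≠ 0) (F : L2R) :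
    inner ℂ (eL z) F = ∫ s : ℝ, (starRingEnd ℂ) ((z + s * I)⁻¹) * F s := by
  rw [L2.inner_def]
  refine integral_congr_ae ?_
  filter_upwards [eL_ae hz] with s hs
  rw [hs, RCLike.inner_apply, mul_comm]

lemma enorm_sq_L2 (F : L2R) : ‖F‖ₑ ^ 2 = ∫⁻ s : ℝ, ‖F s‖ₑ ^ 2 := by
  rw [Lp.enorm_def, eLpNorm_eq_lintegral_rpow_enorm_toReal (by simp) (by simp)]
  simp only [ENNReal.toReal_ofNat, ENNReal.rpow_ofNat]
  rw [← ENNReal.rpow_two, ← ENNReal.rpow_mul]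
  norm_num

lemma norm_eL {z : ℂ} (hz : z.re ≠ 0) : ‖eL z‖ ^ 2 = Real.pi / |z.re| := by
  have h := enorm_sq_L2 (eL z)
  have h2 : ∫⁻ s : ℝ, ‖(eL z) s‖ₑ ^ 2 = ENNReal.ofReal (Real.pi / |z.re|) := by
    rw [← klint z hz]
    refine lintegral_congr_ae ?_
    filter_upwards [eL_ae hz] with s hs
    rw [hs]
  rw [h2, ← ofReal_norm, ← ENNReal.ofReal_pow (norm_nonneg _)] at h
  rwa [ENNReal.ofReal_eq_ofReal_iff (by positivity) (by positivity)] at h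

lemma conj_E (w : ℂ) (s : ℝ) :
    (starRingEnd ℂ) (((starRingEnd ℂ) w + s * I)⁻¹) = (w - s * I)⁻¹ := by
  simp [sub_eq_add_neg]

/-- Boundary vectors on the line `Re = δ`. -/
lemma line_vec {g : ℂ → ℂ} (hg : MemH2 g) {δ : ℝ} (hδ : 0 < δ) :
    ∃ F : L2R, (F =ᵐ[volume] fun s : ℝ => g (δ + s * I)) ∧ ‖F‖ₑ ^ 2 ≤ H2normSq g ∧
      (∀ w : ℂ, 0 < w.re → inner ℂ (eL ((starRingEnd ℂ) w)) F = 2 * Real.pi * g (w + δ)) ∧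
      ∀ z : ℂ, z.re < 0 → inner ℂ (eL z) F = 0 := by
  have hc : Continuous (fun y : ℝ => g (δ + y * I)) :=
      line_cont (δ := δ) le_rfl (fun z hz => hg.diffAt (hδ.trans_le hz))
  have hm : MemLp (fun s : ℝ => g (δ + s * I)) 2 := by
    refine ⟨hc.aestronglyMeasurable, ?_⟩
    rw [eLpNorm_eq_lintegral_rpow_enorm_toReal (by simp) (by simp)]
    simp only [ENNReal.toReal_ofNat, ENNReal.rpow_ofNat]
    exact ENNReal.rpow_lt_top_of_nonneg (by norm_num) ((H2_line hδ).trans_lt hg.2).ne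
  have hae := hm.coeFn_toLp
  refine ⟨hm.toLp, hae, ?_, ?_, ?_⟩
  · rw [enorm_sq_L2]
    refine le_trans (le_of_eq ?_) (H2_line (g := g) hδ)
    refine lintegral_congr_ae ?_
    filter_upwards [hae] with s hs
    rw [hs]
  · intro w hw
    rw [inner_eL (by simpa using hw.ne'), ← cauchy_in hg hδ hw]
    refine integral_congr_ae ?_
    filter_upwards [hae] with s hs
    rw [hs, conj_E]
  · intro z hz
    rw [inner_eL hz.ne]
    have h := cauchy_out hg hδ (z := -(starRingEnd ℂ) z) (by simpa using hz)
    rw [← neg_eq_zero, ← integral_neg, ← h]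
    refine integral_congr_ae ?_
    filter_upwards [hae] with s hs
    rw [hs]
    have : (starRingEnd ℂ) ((z + s * I)⁻¹) = - (-(starRingEnd ℂ) z + s * I)⁻¹ := by
      rw [map_inv₀, ← inv_neg]
      congr 1
      simp
      ring
    rw [this]; ring

lemma boundary_vec {g : ℂ → ℂ} (hg : MemH2 g) :
    ∃ F : L2R,
      (∀ w : ℂ, 0 < w.re → inner ℂ (eL ((starRingEnd ℂ) w)) F = 2 * Real.pi * g w) ∧
      ∀ z : ℂ, z.re < 0 → inner ℂ (eL z) F = 0 := by
  have hd : ∀ n : ℕ, (0 : ℝ) < 1 / ((n : ℝ) + 1) := fun n => by positivity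
  choose F _ hF1 hF2 hF3 using fun n : ℕ => line_vec hg (hd n)
  set r : ℝ := (H2normSq g).toReal + 1
  have hr : ∀ n, ‖F n‖ ≤ r := by
    intro n
    have h := ENNReal.toReal_mono hg.2.ne (hF1 n)
    simp only [ENNReal.toReal_pow, toReal_enorm] at h
    simp only [r]
    nlinarith [sq_nonneg (‖F n‖ - 1)]
  let u : ℕ → WeakDual ℂ L2R := fun n => StrongDual.toWeakDual (InnerProductSpace.toDual ℂ L2R (F n))
  have hS := WeakDual.isCompact_closedBall (𝕜 := ℂ) (E := L2R) 0 r
  have hu : ∀ n, u n ∈ (WeakDual.toStrongDual ⁻¹' Metric.closedBall (0 : StrongDual ℂ L2R) r) := by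
    intro n
    simp [u]
    exact hr n
  obtain ⟨ψ, -, hψ⟩ := hS.ultrafilter_le_nhds ((Filter.hyperfilter ℕ).map u) (by
    simp only [Filter.le_principal_iff]
    exact Filter.mem_map.mpr (Filter.Eventually.of_forall hu))
  have ht : Filter.Tendsto u (Filter.hyperfilter ℕ) (nhds ψ) := hψ
  obtain ⟨G, hG⟩ := (InnerProductSpace.toDual ℂ L2R).surjective (WeakDual.toStrongDual ψ)
  have hev : ∀ (e : L2R) (c : ℂ), Filter.Tendsto (fun n => inner ℂ e (F n)) Filter.atTop (nhds c) →
      inner ℂ e G = c := by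
    intro e c hc
    have h1 : Filter.Tendsto (fun n => u n e) (Filter.hyperfilter ℕ) (nhds (ψ e)) :=
      ((WeakDual.eval_continuous e).tendsto ψ).comp ht
    have h2 : ψ e = inner ℂ G e := by
      have := congrArg (fun l => l e) hG
      simp at this
      exact this.symm
    have h3 : ∀ n, u n e = (starRingEnd ℂ) (inner ℂ e (F n)) := by
      intro n
      rw [inner_conj_symm]
      simp [u]
    have h4 : Filter.Tendsto (fun n => u n e) (Filter.hyperfilter ℕ) (nhds ((starRingEnd ℂ) c)) := by
      simp_rw [h3]
      exact ((continuous_conj.tendsto c).comp hc).mono_left Nat.hyperfilter_le_atTop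
    have h5 := tendsto_nhds_unique h1 h4
    rw [h2, ← inner_conj_symm] at h5
    exact (starRingEnd ℂ).injective h5
  refine ⟨G, fun w hw => hev _ _ ?_, fun z hz => hev _ _ ?_⟩
  · simp_rw [fun n => hF2 n w hw]
    refine Filter.Tendsto.const_mul _ ?_
    refine ((hg.diffAt hw).continuousAt.tendsto).comp ?_
    have := (continuous_ofReal.tendsto 0).comp (tendsto_one_div_add_atTop_nhds_zero_nat (𝕜 := ℝ))
    simpa using this.const_add w
  · simp_rw [fun n => hF3 n z hz]
    exact tendsto_const_nhds

lemma integrable_EF {z : ℂ} (hz : z.re ≠ 0) (F : L2R) :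
    Integrable (fun s : ℝ => (starRingEnd ℂ) ((z + s * I)⁻¹) * F s) := by
  refine (L2.integrable_inner (𝕜 := ℂ) (eL z) F).congr ?_
  filter_upwards [eL_ae hz] with s hs
  rw [hs, RCLike.inner_apply, mul_comm]

lemma poisson_bound (F : L2R) (hW : ∀ z : ℂ, z.re < 0 → inner ℂ (eL z) F = 0) (g : ℂ → ℂ)
    (hg : ∀ w : ℂ, 0 < w.re → inner ℂ (eL ((starRingEnd ℂ) w)) F = 2 * Real.pi * g w) :
    H2normSq g ≤ ‖F‖ₑ ^ 2 := by
  refine iSup₂_le fun x hx => ?_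
  have hx : 0 < x := hx
  change ∫⁻ y : ℝ, ‖g (x + y * I)‖ₑ ^ 2 ≤ _
  have hFm : Measurable F := (Lp.stronglyMeasurable F).measurable
  have hpi : ENNReal.ofReal Real.pi ≠ 0 := by simp [Real.pi_pos]
  have hx0 : ENNReal.ofReal x ≠ 0 := by simpa using hx
  have hEc : Continuous (fun s : ℝ => ((x : ℂ) + s * I)⁻¹) :=
    Continuous.inv₀ (by fun_prop) (ne_of_re (by simpa using hx.ne'))
  have hk : ∫⁻ s : ℝ, ‖((x : ℂ) + s * I)⁻¹‖ₑ ^ 2 = ENNReal.ofReal (Real.pi / x) := by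
    have := klint x (by simpa using hx.ne')
    simpa [abs_of_pos hx] using this
  have hxk : ENNReal.ofReal x * ENNReal.ofReal (Real.pi / x) = ENNReal.ofReal Real.pi := by
    rw [← ENNReal.ofReal_mul hx.le]
    congr 1
    field_simp
  have hpt : ∀ y : ℝ, (Real.pi : ℂ) * g (x + y * I) =
      ∫ s : ℝ, (x : ℂ) * (((‖((x : ℂ) + (s - y : ℝ) * I)⁻¹‖ ^ 2 : ℝ) : ℂ) * F s) := by
    intro y
    set w : ℂ := x + y * I with hw
    have hwre : 0 < w.re := by simpa [hw] using hx
    have h1 := hg w hwre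
    have h2 := hW (-w) (by simpa using hwre)
    have hz1 : ((starRingEnd ℂ) w).re ≠ 0 := by simpa using hwre.ne'
    have hz2 : (-w).re ≠ 0 := by simpa using hwre.ne'
    rw [inner_eL hz1] at h1
    rw [inner_eL hz2] at h2
    have h3 : 2 * Real.pi * g w = ∫ s : ℝ, (2 * x : ℂ) *
        (((‖((x : ℂ) + (s - y : ℝ) * I)⁻¹‖ ^ 2 : ℝ) : ℂ) * F s) := by
      rw [← h1, ← sub_zero (∫ _, _), ← h2, ← integral_sub (integrable_EF hz1 F) (integrable_EF hz2 F)]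
      refine integral_congr_ae (Filter.Eventually.of_forall fun s => ?_)
      simp only
      rw [← sub_mul, ← mul_assoc]
      congr 1
      rw [conj_E]
      have e1 : ((x : ℂ) + (s - y : ℝ) * I) = (starRingEnd ℂ) w + s * I := by
        rw [hw]; simp; ring
      have n1 := ne_of_re hz1 s
      have hcj : (starRingEnd ℂ) ((starRingEnd ℂ) w + s * I) = w - s * I := by simp; ring
      have n2 : w - s * I ≠ 0 := by
        rw [← hcj]; simpa only [ne_eq, map_eq_zero] using n1
      have e2 : (starRingEnd ℂ) ((-w + s * I)⁻¹) = - ((starRingEnd ℂ) w + s * I)⁻¹ := by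
        rw [map_inv₀, ← inv_neg]
        congr 1
        simp; ring
      rw [e1, e2]
      push_cast
      rw [← Complex.mul_conj', map_inv₀, hcj]
      have e3 : (2 * x : ℂ) = (w - s * I) + ((starRingEnd ℂ) w + s * I) := by
        rw [hw]; simp; ring
      rw [e3]
      field_simp
      ring
    rw [integral_const_mul] at h3 ⊢
    linear_combination h3 / 2
  have hcs : ∀ y : ℝ, ENNReal.ofReal Real.pi ^ 2 * ‖g (x + y * I)‖ₑ ^ 2 ≤
      ENNReal.ofReal x * ENNReal.ofReal Real.pi *
        ∫⁻ s : ℝ, ‖((x : ℂ) + (s - y : ℝ) * I)⁻¹‖ₑ ^ 2 * ‖F s‖ₑ ^ 2 := by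
    intro y
    have hE' : Continuous (fun s : ℝ => ((x : ℂ) + (s - y : ℝ) * I)⁻¹) :=
      hEc.comp (continuous_id.sub continuous_const)
    have h := csh (f := fun s : ℝ => ((x : ℂ) + (s - y : ℝ) * I)⁻¹)
      (g := fun s : ℝ => ((x : ℂ) + (s - y : ℝ) * I)⁻¹ * F s) hE'.aemeasurable
      (hE'.measurable.mul hFm).aemeasurable
    rw [lintegral_sub_right_eq_self (fun s : ℝ => ‖((x : ℂ) + s * I)⁻¹‖ₑ ^ 2) y, hk] at h
    simp only [enorm_mul, mul_pow] at h
    have hle : ENNReal.ofReal Real.pi * ‖g (x + y * I)‖ₑ ≤ ENNReal.ofReal x *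
        ∫⁻ s : ℝ, ‖((x : ℂ) + (s - y : ℝ) * I)⁻¹‖ₑ *
          (‖((x : ℂ) + (s - y : ℝ) * I)⁻¹‖ₑ * ‖F s‖ₑ) := by
      have e : ENNReal.ofReal Real.pi * ‖g (x + y * I)‖ₑ = ‖(Real.pi : ℂ) * g (x + y * I)‖ₑ := by
        rw [enorm_mul, ← ofReal_norm (Real.pi : ℂ)]
        congr 2
        simp [abs_of_pos Real.pi_pos]
      rw [e, hpt y, ← lintegral_const_mul' _ _ ENNReal.ofReal_ne_top]
      refine (enorm_integral_le_lintegral_enorm _).trans (le_of_eq ?_)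
      refine lintegral_congr fun s => ?_
      rw [enorm_mul, enorm_mul, ← ofReal_norm (x : ℂ), ← mul_assoc ‖_‖ₑ ‖_‖ₑ ‖F s‖ₑ, ← pow_two]
      congr 2
      · simp [abs_of_pos hx]
      · rw [← ofReal_norm, ← ofReal_norm, ← ENNReal.ofReal_pow (norm_nonneg _)]
        congr 1
        rw [Complex.norm_real, Real.norm_of_nonneg (by positivity)]
    calc _ = (ENNReal.ofReal Real.pi * ‖g (x + y * I)‖ₑ) ^ 2 := by rw [mul_pow]
      _ ≤ _ := pow_le_pow_left' hle 2
      _ ≤ ENNReal.ofReal x ^ 2 * (ENNReal.ofReal (Real.pi / x) *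
          ∫⁻ s : ℝ, ‖((x : ℂ) + (s - y : ℝ) * I)⁻¹‖ₑ ^ 2 * ‖F s‖ₑ ^ 2) := by
          rw [mul_pow]; gcongr
      _ = _ := by
          rw [← hxk]; ring
  have hjm : Measurable (fun p : ℝ × ℝ => ‖((x : ℂ) + (p.2 - p.1 : ℝ) * I)⁻¹‖ₑ ^ 2 * ‖F p.2‖ₑ ^ 2) := by
    refine Measurable.mul (Measurable.pow_const (Measurable.enorm ?_) _)
      (Measurable.pow_const (hFm.comp measurable_snd).enorm _)
    exact hEc.measurable.comp (measurable_snd.sub measurable_fst)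
  have hdouble : ∫⁻ y : ℝ, ∫⁻ s : ℝ, ‖((x : ℂ) + (s - y : ℝ) * I)⁻¹‖ₑ ^ 2 * ‖F s‖ₑ ^ 2
      = ENNReal.ofReal (Real.pi / x) * ‖F‖ₑ ^ 2 := by
    rw [lintegral_lintegral_swap hjm.aemeasurable, enorm_sq_L2,
      ← lintegral_const_mul' _ _ ENNReal.ofReal_ne_top]
    refine lintegral_congr fun s => ?_
    rw [lintegral_mul_const' _ _ (ENNReal.pow_ne_top enorm_ne_top)]
    rw [lintegral_sub_left_eq_self (fun t : ℝ => ‖((x : ℂ) + t * I)⁻¹‖ₑ ^ 2) s, hk]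
  have hfin : ENNReal.ofReal Real.pi ^ 2 * ∫⁻ y : ℝ, ‖g (x + y * I)‖ₑ ^ 2 ≤
      ENNReal.ofReal Real.pi ^ 2 * ‖F‖ₑ ^ 2 := by
    rw [← lintegral_const_mul' _ _ (ENNReal.pow_ne_top ENNReal.ofReal_ne_top)]
    refine (lintegral_mono hcs).trans (le_of_eq ?_)
    rw [lintegral_const_mul' _ _ (ENNReal.mul_ne_top ENNReal.ofReal_ne_top ENNReal.ofReal_ne_top),
      hdouble]
    calc _ = (ENNReal.ofReal x * ENNReal.ofReal (Real.pi / x)) * ENNReal.ofReal Real.pi * ‖F‖ₑ ^ 2 := by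
            ring
      _ = _ := by rw [hxk]; ring
  rwa [ENNReal.mul_le_mul_iff_right (pow_ne_zero 2 hpi)
    (ENNReal.pow_ne_top ENNReal.ofReal_ne_top)] at hfin

lemma eL_kernel {c : ℂ} (hc : 0 < c.re) :
    (∀ w : ℂ, 0 < w.re → inner ℂ (eL ((starRingEnd ℂ) w)) (eL c) = 2 * Real.pi * (1 / (w + c))) ∧
      ∀ z : ℂ, z.re < 0 → inner ℂ (eL z) (eL c) = 0 := by
  set δ : ℝ := c.re / 2 with hδ
  have hδ0 : 0 < δ := by positivity
  have hg : MemH2 (fun w => (w + (c - δ))⁻¹) := by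
    constructor
    · intro w hw
      have hw : 0 < w.re := hw
      refine DifferentiableAt.differentiableWithinAt (DifferentiableAt.inv (by fun_prop) ?_)
      intro h
      have := congrArg Complex.re h
      simp [hδ] at this; linarith
    · refine lt_of_le_of_lt (b := ENNReal.ofReal (Real.pi / δ)) ?_ ENNReal.ofReal_lt_top
      refine iSup₂_le fun x hx => ?_
      have hx : 0 < x := hx
      have hre : ((x : ℂ) + (c - δ)).re = x + δ := by simp [hδ]; ring
      have hk := klint (x + (c - δ)) (by rw [hre]; positivity)
      have e : ∀ y : ℝ, (x + (c - δ) + y * I : ℂ) = x + y * I + (c - δ) := fun y => by ring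
      simp only [e] at hk
      change ∫⁻ y : ℝ, ‖((x + y * I : ℂ) + (c - δ))⁻¹‖ₑ ^ 2 ≤ _
      rw [hk, hre]
      gcongr
      refine le_trans ?_ (le_abs_self _)
      linarith
  obtain ⟨F, hF, -, h1, h2⟩ := line_vec hg hδ0
  have : F = eL c := by
    refine Lp.ext (hF.trans ((eL_ae hc.ne').trans (Filter.Eventually.of_forall fun s => ?_)).symm)
    simp only
    congr 1
    ring
  rw [← this]
  refine ⟨fun w hw => ?_, h2⟩
  rw [h1 w hw, one_div]
  congr 2
  ring

lemma holo_G (F : L2R) {w₀ : ℂ} (hw : 0 < w₀.re) :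
    DifferentiableAt ℂ (fun w => ∫ s : ℝ, (w - s * I)⁻¹ * F s) w₀ := by
  have hlow : ∀ s : ℝ, w₀.re ≤ ‖w₀ - s * I‖ := fun s => by
    have := re_le_norm (w₀ - s * I)
    simpa using this
  have hball : ∀ w ∈ Metric.ball w₀ (w₀.re / 2), ∀ s : ℝ, ‖w₀ - s * I‖ / 2 ≤ ‖w - s * I‖ := by
    intro w hwb s
    rw [Metric.mem_ball, dist_eq_norm] at hwb
    have h1 : ‖w₀ - s * I‖ ≤ ‖w - s * I‖ + ‖w - w₀‖ := by
      have := norm_sub_le (w - s * I) (w - w₀)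
      simpa using this
    linarith [hlow s]
  have hne : ∀ w ∈ Metric.ball w₀ (w₀.re / 2), ∀ s : ℝ, w - s * I ≠ 0 := by
    intro w hwb s h
    have := hball w hwb s
    rw [h, norm_zero] at this
    linarith [hlow s]
  have hFm : Measurable F := (Lp.stronglyMeasurable F).measurable
  have hmeas : ∀ w : ℂ, Measurable (fun s : ℝ => (w - s * I)⁻¹) := fun w => by fun_prop
  have hint : Integrable (fun s : ℝ => (w₀ - s * I)⁻¹ * F s) := by
    have := integrable_EF (z := (starRingEnd ℂ) w₀) (by simpa using hw.ne') F
    simpa only [conj_E] using this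
  have hmem : w₀ ∈ Metric.ball w₀ (w₀.re / 2) := Metric.mem_ball_self (by positivity)
  have := hasDerivAt_integral_of_dominated_loc_of_deriv_le (𝕜 := ℂ)
    (F := fun (w : ℂ) (s : ℝ) => (w - s * I)⁻¹ * F s)
    (F' := fun (w : ℂ) (s : ℝ) => (-1 / (w - s * I) ^ 2) * F s)
    (bound := fun s : ℝ => 4 / w₀.re * ‖(w₀ - s * I)⁻¹ * F s‖)
    (μ := volume) (x₀ := w₀) (s := Metric.ball w₀ (w₀.re / 2))
    (Metric.ball_mem_nhds _ (by positivity))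
    (Filter.Eventually.of_forall fun w => ((hmeas w).mul hFm).aestronglyMeasurable)
    hint (Measurable.aestronglyMeasurable (by fun_prop)) ?_ (hint.norm.const_mul _) ?_
  · exact this.2.differentiableAt
  · refine Filter.Eventually.of_forall fun s w hwb => ?_
    have h1 := hball w hwb s
    have h2 := hlow s
    rw [norm_mul, norm_mul, ← mul_assoc, norm_div, norm_neg, norm_one, norm_pow, norm_inv]
    gcongr
    have h0 : 0 < ‖w₀ - s * I‖ := by linarith
    have h3 : w₀.re * ‖w₀ - s * I‖ / 4 ≤ ‖w - s * I‖ ^ 2 := by nlinarith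
    calc 1 / ‖w - s * I‖ ^ 2 ≤ 1 / (w₀.re * ‖w₀ - s * I‖ / 4) := by gcongr
      _ = _ := by field_simp
  · refine Filter.Eventually.of_forall fun s w hwb => ?_
    have h1 : HasDerivAt (fun w : ℂ => w - s * I) 1 w := (hasDerivAt_id w).sub_const _
    exact (h1.inv (hne w hwb s)).mul_const _

lemma theta_sq {w a : ℂ} (hw : 0 < w.re) (ha : 0 < a.re) :
    ‖(w - a) / (w + (starRingEnd ℂ) a)‖ ^ 2 =
      1 - 4 * w.re * a.re / ‖w + (starRingEnd ℂ) a‖ ^ 2 := by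
  have hpos : 0 < ‖w + (starRingEnd ℂ) a‖ := by
    rw [norm_pos_iff]
    intro h
    have := congrArg Complex.re h
    simp at this; linarith
  rw [norm_div, div_pow, eq_sub_iff_add_eq, ← add_div, div_eq_one_iff_eq (by positivity)]
  rw [Complex.sq_norm, Complex.sq_norm, normSq_apply, normSq_apply]
  simp
  ring

lemma blaschke_step {G : ℂ → ℂ} {M : ℝ} {a : ℂ} (hG : DifferentiableOn ℂ G {w | 0 < w.re})
    (hM : ∀ w : ℂ, 0 < w.re → ‖G w‖ ≤ M) (ha : 0 < a.re) (h0 : G a = 0) :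
    ∃ G1 : ℂ → ℂ, DifferentiableOn ℂ G1 {w | 0 < w.re} ∧ (∀ w : ℂ, 0 < w.re → ‖G1 w‖ ≤ M) ∧
      ∀ w : ℂ, 0 < w.re → G w = (w - a) / (w + (starRingEnd ℂ) a) * G1 w := by
  set ψ : ℂ → ℂ := fun z => (a + (starRingEnd ℂ) a * z) / (1 - z) with hψ
  set θ : ℂ → ℂ := fun w => (w - a) / (w + (starRingEnd ℂ) a) with hθ
  have hwa : ∀ w : ℂ, 0 < w.re → w + (starRingEnd ℂ) a ≠ 0 := by
    intro w hw h
    have := congrArg Complex.re h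
    simp at this; linarith
  have hz1 : ∀ z ∈ Metric.ball (0 : ℂ) 1, 1 - z ≠ 0 := by
    intro z hz h
    rw [sub_eq_zero] at h
    simp [← h] at hz
  have hψre : ∀ z ∈ Metric.ball (0 : ℂ) 1, 0 < (ψ z).re := by
    intro z hz
    have h1 := hz1 z hz
    have hn : normSq z < 1 := by
      rw [← Complex.sq_norm]
      have : ‖z‖ < 1 := by simpa using hz
      nlinarith [norm_nonneg z]
    have hp : 0 < normSq (1 - z) := normSq_pos.mpr h1
    have : (ψ z).re = a.re * (1 - normSq z) / normSq (1 - z) := by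
      simp only [hψ]
      rw [Complex.div_re, ← add_div]
      congr 1
      simp [normSq_apply]
      ring
    rw [this]
    have : 0 < 1 - normSq z := by linarith
    positivity
  have hθb : ∀ w : ℂ, 0 < w.re → θ w ∈ Metric.ball (0 : ℂ) 1 := by
    intro w hw
    have := theta_sq hw ha
    have h2 : 0 < 4 * w.re * a.re / ‖w + (starRingEnd ℂ) a‖ ^ 2 := by
      have := norm_pos_iff.mpr (hwa w hw)
      positivity
    rw [mem_ball_zero_iff]
    simp only [hθ]
    nlinarith [norm_nonneg ((w - a) / (w + (starRingEnd ℂ) a))]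
  have haa : a + (starRingEnd ℂ) a ≠ 0 := hwa a ha
  have hψθ : ∀ w : ℂ, 0 < w.re → ψ (θ w) = w := by
    intro w hw
    have h1 := hwa w hw
    have h2 := hz1 _ (hθb w hw)
    simp only [hψ]
    rw [div_eq_iff h2]
    simp only [hθ]
    field_simp
    ring
  set H : ℂ → ℂ := fun z => G (ψ z) with hH
  have hHd : DifferentiableOn ℂ H (Metric.ball 0 1) := by
    refine hG.comp ?_ hψre
    intro z hz
    have h1 : DifferentiableAt ℂ (fun z : ℂ => a + (starRingEnd ℂ) a * z) z := by
      generalize (starRingEnd ℂ) a = a'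
      fun_prop
    have h2 : DifferentiableAt ℂ (fun z : ℂ => 1 - z) z := by fun_prop
    exact (h1.div h2 (hz1 z hz)).differentiableWithinAt
  have hH0 : H 0 = 0 := by simp [hH, hψ, h0]
  have hHm : Set.MapsTo H (Metric.ball 0 1) (Metric.closedBall (H 0) M) := by
    intro z hz
    rw [hH0, mem_closedBall_zero_iff]
    exact hM _ (hψre z hz)
  refine ⟨fun w => dslope H 0 (θ w), ?_, ?_, ?_⟩
  · refine DifferentiableOn.comp (t := Metric.ball 0 1)
      ((Complex.differentiableOn_dslope (Metric.ball_mem_nhds _ one_pos)).mpr hHd) ?_ hθb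
    intro w hw
    have h1 : DifferentiableAt ℂ (fun w : ℂ => w - a) w := by fun_prop
    have h2 : DifferentiableAt ℂ (fun w : ℂ => w + (starRingEnd ℂ) a) w :=
      differentiableAt_id.add_const _
    exact (h1.div h2 (hwa w hw)).differentiableWithinAt
  · intro w hw
    have := Complex.norm_dslope_le_div_of_mapsTo_ball hHd hHm (hθb w hw)
    simpa using this
  · intro w hw
    have := sub_smul_dslope H 0 (θ w)
    rw [hH0, sub_zero, sub_zero, smul_eq_mul] at this
    change G w = θ w * _
    rw [this]
    simp only [hH, hψθ w hw]

lemma blaschke_prod {G : ℂ → ℂ} {M : ℝ} {a : ℕ → ℂ} (hG : DifferentiableOn ℂ G {w | 0 < w.re})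
    (hM : ∀ w : ℂ, 0 < w.re → ‖G w‖ ≤ M) (ha : ∀ n, 0 < (a n).re) (hinj : Function.Injective a)
    (h0 : ∀ n, G (a n) = 0) (N : ℕ) :
    ∃ G1 : ℂ → ℂ, DifferentiableOn ℂ G1 {w | 0 < w.re} ∧ (∀ w : ℂ, 0 < w.re → ‖G1 w‖ ≤ M) ∧
      (∀ n, N ≤ n → G1 (a n) = 0) ∧
      ∀ w : ℂ, 0 < w.re → G w =
        (∏ j ∈ Finset.range N, (w - a j) / (w + (starRingEnd ℂ) (a j))) * G1 w := by
  induction N with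
  | zero => exact ⟨G, hG, hM, fun n _ => h0 n, by simp⟩
  | succ N ih =>
    obtain ⟨G1, h1, h2, h3, h4⟩ := ih
    obtain ⟨G2, k1, k2, k3⟩ := blaschke_step h1 h2 (ha N) (h3 N le_rfl)
    refine ⟨G2, k1, k2, fun n hn => ?_, fun w hw => ?_⟩
    · have e := k3 (a n) (ha n)
      rw [h3 n (by omega)] at e
      have hne : (a n - a N) / (a n + (starRingEnd ℂ) (a N)) ≠ 0 := by
        refine div_ne_zero (sub_ne_zero.mpr (hinj.ne (by omega))) ?_
        intro h
        have := congrArg Complex.re h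
        have := ha n
        have := ha N
        simp at *; linarith
      exact (mul_eq_zero.mp e.symm).resolve_left hne
    · rw [Finset.prod_range_succ, h4 w hw, k3 w hw]; ring

lemma blaschke_zero {G : ℂ → ℂ} {M : ℝ} {c β : ℂ} (hG : DifferentiableOn ℂ G {w | 0 < w.re})
    (hM : ∀ w : ℂ, 0 < w.re → ‖G w‖ ≤ M) (hc : 0 < c.re) (hβ : 0 < β.re)
    (h0 : ∀ n : ℕ, G (c + n * β) = 0) {w : ℂ} (hw : 0 < w.re) : G w = 0 := by
  set a : ℕ → ℂ := fun n => c + n * β with ha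
  have hare : ∀ n, (a n).re = c.re + n * β.re := fun n => by simp [ha]
  have hapos : ∀ n, 0 < (a n).re := fun n => by rw [hare]; positivity
  have hinj : Function.Injective a := by
    intro m n h
    simp only [ha, add_right_inj] at h
    have hb : β ≠ 0 := by rintro rfl; simp at hβ
    exact_mod_cast mul_right_cancel₀ hb h
  set m := min c.re β.re with hm
  have hmpos : 0 < m := lt_min hc hβ
  set A := ‖w‖ + ‖c‖ + ‖β‖ with hA
  have hApos : 0 < A := by
    have : 0 < ‖w‖ := norm_pos_iff.mpr (by rintro rfl; simp at hw)
    positivity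
  set η := 2 * w.re * m / A ^ 2 with hη
  have hηpos : 0 < η := by positivity
  have hM0 : 0 ≤ M := (norm_nonneg _).trans (hM w hw)
  have hfac : ∀ j : ℕ, ‖(w - a j) / (w + (starRingEnd ℂ) (a j))‖ ≤
      Real.exp (-(η * (1 / ((j : ℝ) + 1)))) := by
    intro j
    have h1 := theta_sq hw (hapos j)
    have hpos : 0 < ‖w + (starRingEnd ℂ) (a j)‖ := by
      rw [norm_pos_iff]
      intro h
      have := congrArg Complex.re h
      have := hapos j
      simp at *; linarith
    have hup : ‖w + (starRingEnd ℂ) (a j)‖ ≤ A * (j + 1) := by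
      calc _ ≤ ‖w‖ + ‖a j‖ := by
            have := norm_add_le w ((starRingEnd ℂ) (a j))
            simpa using this
        _ ≤ ‖w‖ + (‖c‖ + j * ‖β‖) := by
            gcongr
            have := norm_add_le c (j * β)
            simpa [ha] using this
        _ ≤ _ := by
            rw [hA]
            have : (0 : ℝ) ≤ j := by positivity
            nlinarith [norm_nonneg w, norm_nonneg c, norm_nonneg β, mul_nonneg this (norm_nonneg w),
              mul_nonneg this (norm_nonneg c)]
    have hlow : m * (j + 1) ≤ (a j).re := by
      rw [hare]
      have e1 : m ≤ c.re := min_le_left _ _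
      have e2 : m ≤ β.re := min_le_right _ _
      have : (0 : ℝ) ≤ j := by positivity
      nlinarith
    have ht : 2 * (η * (1 / ((j : ℝ) + 1))) ≤
        4 * w.re * (a j).re / ‖w + (starRingEnd ℂ) (a j)‖ ^ 2 := by
      calc 2 * (η * (1 / ((j : ℝ) + 1))) = 4 * w.re * (m * (j + 1)) / (A * (j + 1)) ^ 2 := by
            rw [hη]; field_simp; ring
        _ ≤ _ := by
            have h4 : 0 ≤ 4 * w.re * (a j).re := by
              have := hapos j
              positivity
            gcongr
    have h2 : ‖(w - a j) / (w + (starRingEnd ℂ) (a j))‖ ^ 2 ≤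
        Real.exp (-(η * (1 / ((j : ℝ) + 1)))) ^ 2 := by
      rw [h1, ← Real.exp_nat_mul]
      have := Real.add_one_le_exp ((2 : ℕ) * (-(η * (1 / ((j : ℝ) + 1)))))
      push_cast at this ⊢
      linarith
    exact (pow_le_pow_iff_left₀ (norm_nonneg _) (Real.exp_pos _).le two_ne_zero).mp h2
  have hbound : ∀ N : ℕ, ‖G w‖ ≤
      Real.exp (-(η * ∑ j ∈ Finset.range N, 1 / ((j : ℝ) + 1))) * M := by
    intro N
    obtain ⟨G1, -, k2, -, k4⟩ := blaschke_prod hG hM hapos hinj h0 N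
    rw [k4 w hw, norm_mul, Finset.mul_sum, ← Finset.sum_neg_distrib, Real.exp_sum, norm_prod]
    refine mul_le_mul ?_ (k2 w hw) (norm_nonneg _) (Finset.prod_nonneg fun _ _ => (Real.exp_pos _).le)
    exact Finset.prod_le_prod (fun _ _ => norm_nonneg _) fun j _ => hfac j
  have hlim : Filter.Tendsto (fun N : ℕ =>
      Real.exp (-(η * ∑ j ∈ Finset.range N, 1 / ((j : ℝ) + 1))) * M) Filter.atTop (nhds (0 * M)) := by
    refine Filter.Tendsto.mul_const _ ?_
    refine Real.tendsto_exp_neg_atTop_nhds_zero.comp ?_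
    exact Real.tendsto_sum_range_one_div_nat_succ_atTop.const_mul_atTop hηpos
  have := ge_of_tendsto' hlim hbound
  rw [zero_mul] at this
  exact norm_le_zero_iff.mp this

lemma inner_eq_zero_of_zeros {b : ℂ} (hb : 0 < b.re) (F : L2R)
    (h : ∀ n : ℕ, inner ℂ (eL (1 + n * b)) F = 0) {w : ℂ} (hw : 0 < w.re) :
    inner ℂ (eL ((starRingEnd ℂ) w)) F = 0 := by
  set c₀ : ℝ := min (1 / 2) (w.re / 2) with hc₀
  have hcpos : 0 < c₀ := lt_min (by norm_num) (by positivity)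
  have hc1 : c₀ ≤ 1 / 2 := min_le_left _ _
  have hc2 : c₀ ≤ w.re / 2 := min_le_right _ _
  have hform : ∀ v : ℂ, 0 < v.re → inner ℂ (eL ((starRingEnd ℂ) v)) F =
      ∫ s : ℝ, (v - s * I)⁻¹ * F s := by
    intro v hv
    rw [inner_eL (by simpa using hv.ne')]
    simp only [conj_E]
  have key := blaschke_zero (G := fun v => inner ℂ (eL ((starRingEnd ℂ) (v + c₀))) F)
    (M := (Real.pi / c₀ + 1) * ‖F‖) (c := 1 - c₀) (β := (starRingEnd ℂ) b) (w := w - c₀)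
    ?_ ?_ (by simp; linarith) (by simpa using hb) ?_ (by simp; linarith)
  · simpa using key
  · intro v hv
    have hv : 0 < v.re := hv
    have hv2 : 0 < (v + c₀).re := by simp; linarith
    have h1 := (holo_G F hv2).comp (f := fun v : ℂ => v + c₀) v (by fun_prop)
    refine DifferentiableWithinAt.congr h1.differentiableWithinAt (fun u hu => ?_) ?_
    · have hu : 0 < u.re := hu
      exact hform _ (by simp; linarith)
    · exact hform _ hv2
  · intro v hv
    refine (norm_inner_le_norm _ _).trans ?_
    gcongr
    have hre : ((starRingEnd ℂ) (v + c₀)).re = v.re + c₀ := by simp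
    have hn := norm_eL (z := (starRingEnd ℂ) (v + c₀)) (by rw [hre]; positivity)
    rw [hre, abs_of_pos (by positivity)] at hn
    have h2 : Real.pi / (v.re + c₀) ≤ Real.pi / c₀ := by
      gcongr; linarith
    nlinarith [sq_nonneg (‖eL ((starRingEnd ℂ) (v + c₀))‖ - 1)]
  · intro n
    rw [← h n]
    congr 2
    simp
    ring

/-- Parabolic non-automorphisms induce cyclic composition operators, with
cyclic vector the reproducing kernel `k₁(w) = 1/(w+1)`. -/
theorem parabolic_cyclic (b : ℂ) (hb : 0 < b.re)
    (φ : ℂ → ℂ) (hφ : ∀ w, φ w = w + b)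
    (k₁ : ℂ → ℂ) (hk : ∀ w, k₁ w = 1 / (w + 1)) :
    ∀ g : ℂ → ℂ, MemH2 g → ∀ ε : ℝ, 0 < ε →
      ∃ h ∈ Submodule.span ℂ (Set.range fun n : ℕ => k₁ ∘ φ^[n]),
        H2normSq (g - h) < ENNReal.ofReal ε ^ 2 := by
  intro g hg ε hε
  have hiter : ∀ (n : ℕ) (w : ℂ), φ^[n] w = w + n * b := by
    intro n
    induction n with
    | zero => simp
    | succ n ih =>
      intro w
      rw [Function.iterate_succ_apply', ih, hφ]
      push_cast; ring
  have hbn : ∀ n : ℕ, 0 < (1 + n * b : ℂ).re := by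
    intro n
    simp
    positivity
  obtain ⟨F, hF1, hF2⟩ := boundary_vec hg
  set S : Submodule ℂ L2R := Submodule.span ℂ (Set.range fun n : ℕ => eL (1 + n * b)) with hS
  have hspan : ∀ h0 ∈ S, ∃ h ∈ Submodule.span ℂ (Set.range fun n : ℕ => k₁ ∘ φ^[n]),
      ∀ w : ℂ, 0 < w.re → inner ℂ (eL ((starRingEnd ℂ) w)) h0 = 2 * Real.pi * h w := by
    intro h0 hh0
    induction hh0 using Submodule.span_induction with
    | mem x hx =>
      obtain ⟨n, rfl⟩ := hx
      refine ⟨k₁ ∘ φ^[n], Submodule.subset_span ⟨n, rfl⟩, fun w hw => ?_⟩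
      simp only
      rw [(eL_kernel (hbn n)).1 w hw, Function.comp_apply, hiter, hk]
      congr 2
      ring
    | zero => exact ⟨0, Submodule.zero_mem _, by simp⟩
    | add x y _ _ ihx ihy =>
      obtain ⟨u, hu, hu2⟩ := ihx
      obtain ⟨v, hv, hv2⟩ := ihy
      refine ⟨u + v, Submodule.add_mem _ hu hv, fun w hw => ?_⟩
      rw [inner_add_right, hu2 w hw, hv2 w hw, Pi.add_apply]; ring
    | smul c x _ ih =>
      obtain ⟨u, hu, hu2⟩ := ih
      refine ⟨c • u, Submodule.smul_mem _ c hu, fun w hw => ?_⟩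
      rw [inner_smul_right, hu2 w hw, Pi.smul_apply, smul_eq_mul]; ring
  have hSz : ∀ z : ℂ, z.re < 0 → eL z ∈ Sᗮ := by
    intro z hz
    rw [hS, Submodule.mem_orthogonal]
    intro u hu
    induction hu using Submodule.span_induction with
    | mem x hx =>
      obtain ⟨n, rfl⟩ := hx
      rw [← inner_conj_symm, (eL_kernel (hbn n)).2 z hz, map_zero]
    | zero => simp
    | add x y _ _ ihx ihy => rw [inner_add_left, ihx, ihy, add_zero]
    | smul c x _ ih => rw [inner_smul_left, ih, mul_zero]
  set V := S.topologicalClosure with hV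
  have hVc : IsClosed (V : Set L2R) := S.isClosed_topologicalClosure
  have : CompleteSpace V := hVc.completeSpace_coe
  obtain ⟨FV, hFV, Fp, hFp, hFsum⟩ := V.exists_add_mem_mem_orthogonal F
  have hFp' : ∀ w : ℂ, 0 < w.re → inner ℂ (eL ((starRingEnd ℂ) w)) Fp = 0 := by
    intro w hw
    refine inner_eq_zero_of_zeros hb Fp (fun n => ?_) hw
    exact (Submodule.mem_orthogonal V Fp).mp hFp _
      (S.le_topologicalClosure (Submodule.subset_span ⟨n, rfl⟩))
  have hFV1 : ∀ w : ℂ, 0 < w.re → inner ℂ (eL ((starRingEnd ℂ) w)) FV = 2 * Real.pi * g w := by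
    intro w hw
    rw [← hF1 w hw, hFsum, inner_add_right, hFp' w hw, add_zero]
  have hFVcl : FV ∈ closure (S : Set L2R) := hFV
  obtain ⟨h0, hh0, hdist⟩ := Metric.mem_closure_iff.mp hFVcl ε hε
  have hFV2 : ∀ z : ℂ, z.re < 0 → inner ℂ (eL z) FV = 0 := by
    intro z hz
    have h1 : eL z ∈ Vᗮ := by
      rw [hV, Submodule.orthogonal_closure]
      exact hSz z hz
    exact (Submodule.mem_orthogonal' V _).mp h1 _ hFV
  obtain ⟨h, hh, hh2⟩ := hspan h0 hh0
  refine ⟨h, hh, ?_⟩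
  have hle := poisson_bound (FV - h0) (fun z hz => ?_) (g - h) (fun w hw => ?_)
  · refine hle.trans_lt ?_
    rw [dist_eq_norm] at hdist
    rw [← ofReal_norm]
    exact ENNReal.pow_lt_pow_left two_ne_zero ((ENNReal.ofReal_lt_ofReal_iff hε).mpr hdist)
  · rw [inner_sub_right, hFV2 z hz, (Submodule.mem_orthogonal' S _).mp (hSz z hz) _ hh0, sub_zero]
  · rw [inner_sub_right, hFV1 w hw, hh2 w hw, Pi.sub_apply]; ring
end
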